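/- Let G be a finite group possessing a normal subgroup N with G/N ≅ C_m ⋉_φ C_m for some positive integer m. Then |G| + d(G) ≤ E(G) ≤ |G| + |G|/m + m − 2. -/

import Mathlib

/-- A sequence (multiset) over `G` is product-one if its terms can be ordered so
that their product equals `1`. -/
def IsProductOne {G : Type*} [Group G] (S : Multiset G) : Prop :=
  ∃ l : List G, (l : Multiset G) = S ∧ l.prod = 1

/-- A sequence is product-one free if it has no nonempty product-one subsequence. -/
def ProductOneFree {G : Type*} [Group G] (S : Multiset G) : Prop :=
  ∀ T ≤ S, T ≠ 0 → ¬ IsProductOne T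

/-!
Write `|G| = n * m ^ 2`, where `n = |N|`. Padding a product-one free sequence with `|G| - 1` copies
of `1` gives the lower bound.

For the upper bound let `K_d ≤ G` be the preimage of `d C_m ⋊ d C_m`. If `p` is the smallest prime
factor of `m / d`, then `d C_m` acts trivially on `d C_m / d p C_m`, because `m / d` and `p - 1` are
coprime; hence `K_d / K_{dp} ≅ C_p ^ 2`. A long sequence over `K_d` is cut into blocks whose product
lies in `K_{dp}`: by Reiher's theorem any `4 p - 3` terms contain such a block of length `p`, and
the last `3 p - 2` terms still contain one of length `p` or `2 p`, since the Davenport constant of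
`C_p ^ 3` is `3 p - 2`. The products of the blocks form a sequence over `K_{dp}`, in which the block
of length `2 p` counts as a single term of weight two.

The descent ends in the group `N`, where `k n + n - 1` terms, at most one of them of weight two and
then `k ≥ 2`, contain a product-one subsequence of weight `k n`. Starting from `k n` copies of the
most frequent term `g`, whether available or not, superfluous copies of `g` are exchanged for unused
terms: were no exchange to preserve the product, Kemperman's inequality would produce more than `n`
different products.
-/

/-! ### Kemperman's inequality -/

section Kemperman

open Finset MulOpposite
open scoped Pointwise

variable {G : Type*} [Group G] [DecidableEq G]

theorem card_inter_op_inv_smul (A : Finset G) (x : G) :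
    #(A ∩ op x⁻¹ • A) = #(A ∩ op x • A) := by
  rw [← card_smul_finset (op x) (A ∩ op x⁻¹ • A), smul_finset_inter, smul_smul, ← op_mul,
    inv_mul_cancel, op_one, one_smul, inter_comm]

theorem card_union_inv_smul (B : Finset G) (x : G) : #(B ∪ x⁻¹ • B) = #(B ∪ x • B) := by
  rw [← card_smul_finset x (B ∪ x⁻¹ • B), smul_finset_union, smul_inv_smul, union_comm]

theorem uniqueMul_one_mulETransformRight {A B : Finset G} {x : G} (hx : x ≠ 1) (hxA : x ∈ A)
    (h : UniqueMul A B 1 1) :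
    UniqueMul (mulETransformRight x (A, B)).1 (mulETransformRight x (A, B)).2 1 1 := by
  intro a b ha hb hab
  simp only [mulETransformRight, mem_union, mem_inter, mem_smul_finset] at ha hb
  obtain ha | ⟨a', ha', rfl⟩ := ha
  · exact h ha hb.1 hab
  obtain ⟨hb, b', hb', rfl⟩ := hb
  obtain ⟨rfl, rfl⟩ := h ha' hb' (by simpa using hab)
  exact absurd (h hxA hb (by simp)).1 hx

theorem uniqueMul_one_mulETransformLeft_inv {A B : Finset G} {x : G} (hx : x ≠ 1) (hxB : x ∈ B)
    (h : UniqueMul A B 1 1) :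
    UniqueMul (mulETransformLeft x⁻¹ (A, B)).1 (mulETransformLeft x⁻¹ (A, B)).2 1 1 := by
  intro a b ha hb hab
  simp only [mulETransformLeft, mem_union, mem_inter, mem_smul_finset] at ha hb
  obtain hb | ⟨b', hb', rfl⟩ := hb
  · exact h ha.1 hb hab
  obtain ⟨ha, a', ha', rfl⟩ := ha
  obtain ⟨rfl, rfl⟩ := h ha' hb' (by simpa using hab)
  exact absurd (h ha hxB (by simp)).2 hx

theorem card_snd_mulETransformRight_lt {A B : Finset G} {x : G} (hx : x ≠ 1) (hxA : x ∈ A)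
    (hB : 1 ∈ B) (h : UniqueMul A B 1 1) : #(mulETransformRight x (A, B)).2 < #B := by
  refine card_lt_card ⟨inter_subset_left, fun hsub ↦ hx ?_⟩
  have hBx : B = x⁻¹ • B :=
    eq_of_subset_of_card_le (hsub.trans inter_subset_right) (card_smul_finset _ _).le
  have hxB : x⁻¹ ∈ B := by
    rw [hBx]
    exact mem_smul_finset.2 ⟨1, hB, by simp⟩
  exact (h hxA hxB (by simp)).1

theorem card_add_card_le_card_mulETransform (A B : Finset G) (x : G) :
    #A + #B ≤ #(mulETransformRight x (A, B)).1 + #(mulETransformRight x (A, B)).2 ∨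
      #A + #B < #(mulETransformLeft x⁻¹ (A, B)).1 + #(mulETransformLeft x⁻¹ (A, B)).2 := by
  have hcard := MulETransform.card x (A, B)
  have hinter := card_inter_op_inv_smul A x
  have hunion := card_union_inv_smul B x
  simp only [mulETransformLeft, mulETransformRight, inv_inv] at hcard ⊢
  omega

theorem card_add_card_le_card_mul_add_one_of_uniqueMul_one {A B : Finset G} (hA : 1 ∈ A)
    (hB : 1 ∈ B) (h : UniqueMul A B 1 1) : #A + #B ≤ #(A * B) + 1 := by
  by_cases hAB : ∃ x ∈ A ∩ B, x ≠ 1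
  · obtain ⟨x, hxAB, hx⟩ := hAB
    obtain ⟨hxA, hxB⟩ := mem_inter.1 hxAB
    have hR : #((mulETransformRight x (A, B)).1 * (mulETransformRight x (A, B)).2) ≤ #(A * B) :=
      card_le_card (mulETransformRight.fst_mul_snd_subset x (A, B))
    have hL : #((mulETransformLeft x⁻¹ (A, B)).1 * (mulETransformLeft x⁻¹ (A, B)).2) ≤
        #(A * B) :=
      card_le_card (mulETransformLeft.fst_mul_snd_subset x⁻¹ (A, B))
    obtain hsum | hsum := card_add_card_le_card_mulETransform A B x
    · have ih := card_add_card_le_card_mul_add_one_of_uniqueMul_one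
        (A := (mulETransformRight x (A, B)).1) (B := (mulETransformRight x (A, B)).2)
        (mem_union_left _ hA)
        (mem_inter.2 ⟨hB, mem_smul_finset.2 ⟨x, hxB, by simp⟩⟩)
        (uniqueMul_one_mulETransformRight hx hxA h)
      exact hsum.trans (ih.trans (Nat.succ_le_succ hR))
    · have ih := card_add_card_le_card_mul_add_one_of_uniqueMul_one
        (A := (mulETransformLeft x⁻¹ (A, B)).1) (B := (mulETransformLeft x⁻¹ (A, B)).2)
        (mem_inter.2 ⟨hA, mem_smul_finset.2 ⟨x, hxA, by simp⟩⟩)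
        (mem_union_left _ hB)
        (uniqueMul_one_mulETransformLeft_inv hx hxB h)
      exact hsum.le.trans (ih.trans (Nat.succ_le_succ hL))
  · push Not at hAB
    rw [← card_union_add_card_inter, eq_singleton_iff_unique_mem.2 ⟨mem_inter.2 ⟨hA, hB⟩, hAB⟩,
      card_singleton]
    exact Nat.succ_le_succ (card_le_card
      (union_subset (subset_mul_left A hB) (subset_mul_right B hA)))
termination_by (2 * #(A * B) - (#A + #B), #B)
decreasing_by
  · have hlt := card_snd_mulETransformRight_lt hx hxA hB h
    simp only [Prod.lex_def]
    omega
  · have hfst := card_le_card (subset_mul_left _ (mem_union_left _ hB) :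
      (mulETransformLeft x⁻¹ (A, B)).1 ⊆
        (mulETransformLeft x⁻¹ (A, B)).1 * (mulETransformLeft x⁻¹ (A, B)).2)
    have hsnd := card_le_card (subset_mul_right _
      (mem_inter.2 ⟨hA, mem_smul_finset.2 ⟨x, hxA, by simp⟩⟩) :
      (mulETransformLeft x⁻¹ (A, B)).2 ⊆
        (mulETransformLeft x⁻¹ (A, B)).1 * (mulETransformLeft x⁻¹ (A, B)).2)
    exact Prod.Lex.left _ _ (by omega)

theorem card_add_card_le_card_mul_add_one_of_uniqueMul {A B : Finset G} {a₀ b₀ : G}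
    (hA : a₀ ∈ A) (hB : b₀ ∈ B) (h : UniqueMul A B a₀ b₀) : #A + #B ≤ #(A * B) + 1 := by
  have hmul : (a₀⁻¹ • A) * (op b₀⁻¹ • B) = a₀⁻¹ • op b₀⁻¹ • (A * B) := by
    rw [smul_mul_assoc, mul_smul_comm]
  have huniq : UniqueMul (a₀⁻¹ • A) (op b₀⁻¹ • B) 1 1 := by
    intro a b ha hb hab
    obtain ⟨a, haA, rfl⟩ := mem_smul_finset.1 ha
    obtain ⟨b, hbB, rfl⟩ := mem_smul_finset.1 hb
    have hab' : a₀⁻¹ * (a * b) * b₀⁻¹ = 1 := by simpa [mul_assoc] using hab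
    have hab₀ : a * b = a₀ * b₀ := by rwa [mul_inv_eq_one, inv_mul_eq_iff_eq_mul] at hab'
    simp [h haA hbB hab₀]
  simpa only [hmul, card_smul_finset] using
    card_add_card_le_card_mul_add_one_of_uniqueMul_one
      (mem_smul_finset.2 ⟨a₀, hA, by simp⟩) (mem_smul_finset.2 ⟨b₀, hB, by simp⟩) huniq

end Kemperman

/-! ### Exchanging letters of a word -/

section Exchange

open Finset
open scoped Pointwise

variable {α G : Type*} [Group G]

/-- The word `l'` arises from the word `l` by exchanging copies of the filler letter `e` for the
letters of `R`, one for one, and permuting. -/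
def Exchange (e : α) (l : List α) (R : Multiset α) (l' : List α) : Prop :=
  (l' : Multiset α) + Multiset.replicate (Multiset.card R) e = l + R

/-- The set of products of the words that arise from `l` by exchanging copies of the filler letter
`e` for letters taken from `U`, a letter `a` being evaluated as `f a`. -/
def exchangeProducts (f : α → G) (e : α) (U : Multiset α) (l : List α) : Set G :=
  {x | ∃ R ≤ U, ∃ l', Exchange e l R l' ∧ (l'.map f).prod = x}

/-- No nontrivial exchange of copies of `e` in `l` for letters from `U` preserves the product. -/
def ExchangeRigid (f : α → G) (e : α) (U : Multiset α) (l : List α) : Prop :=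
  ∀ R ≤ U, ∀ l', Exchange e l R l' → (l'.map f).prod = (l.map f).prod → R = 0

variable {f : α → G} {e b : α} {l l' : List α} {R U V : Multiset α}

namespace Exchange

theorem refl (e : α) (l : List α) : Exchange e l 0 l := by
  simp [Exchange]

theorem cons (h : Exchange e l R l') (b : α) : Exchange e (b :: l) R (b :: l') := by
  simp only [Exchange, ← Multiset.cons_coe, Multiset.cons_add] at h ⊢
  rw [h]

theorem cons_filler (h : Exchange e l R l') (b : α) :
    Exchange e (e :: l) (b ::ₘ R) (b :: l') := by
  simp only [Exchange, ← Multiset.cons_coe, Multiset.cons_add, Multiset.card_cons,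
    Multiset.replicate_succ, Multiset.add_cons] at h ⊢
  rw [h, Multiset.cons_swap]

theorem coe_le_add (h : Exchange e l R l') : (l' : Multiset α) ≤ l + R :=
  h ▸ Multiset.le_add_right _ _

variable [DecidableEq α]

theorem count_add_card (h : Exchange e l R l') :
    Multiset.count e l' + Multiset.card R = Multiset.count e l + R.count e := by
  simpa using congrArg (Multiset.count e) h

theorem count_le (h : Exchange e l R l') : Multiset.count e l' ≤ Multiset.count e l := by
  have hcount := h.count_add_card
  have := Multiset.count_le_card e R
  omega

theorem count_lt (h : Exchange e l R l') (hR : R ≠ 0) (heR : e ∉ R) :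
    Multiset.count e l' < Multiset.count e l := by
  have hcount := h.count_add_card
  rw [Multiset.count_eq_zero_of_notMem heR] at hcount
  have := Multiset.card_pos.2 hR
  omega

end Exchange

theorem mul_mem_exchangeProducts_cons {x : G} (hx : x ∈ exchangeProducts f e U l) (b : α) :
    f b * x ∈ exchangeProducts f e U (b :: l) := by
  obtain ⟨R, hR, l', hl', rfl⟩ := hx
  exact ⟨R, hR, b :: l', hl'.cons b, by simp⟩

theorem exchangeProducts_mono (hUV : U ≤ V) :
    exchangeProducts f e U l ⊆ exchangeProducts f e V l :=
  fun _ ⟨R, hR, l', hl', hx⟩ ↦ ⟨R, hR.trans hUV, l', hl', hx⟩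

theorem ExchangeRigid.mono (h : ExchangeRigid f e V l) (hUV : U ≤ V) : ExchangeRigid f e U l :=
  fun R hR ↦ h R (hR.trans hUV)

theorem ExchangeRigid.of_cons (h : ExchangeRigid f e U (b :: l)) : ExchangeRigid f e U l :=
  fun R hR l' hl' heq ↦ h R hR (b :: l') (hl'.cons b) (by simp [heq])

section Layer

variable [DecidableEq α]

theorem cons_le_of_le_sub_dedup {a : α} (ha : a ∈ U) (hR : R ≤ U - U.dedup) : a ::ₘ R ≤ U := calc
  a ::ₘ R ≤ U.dedup + (U - U.dedup) :=
    add_le_add (Multiset.singleton_le.2 (Multiset.mem_dedup.2 ha)) hR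
  _ = U := add_tsub_cancel_of_le (Multiset.dedup_le U)

theorem ExchangeRigid.uniqueMul [DecidableEq G] (h : ExchangeRigid f e U (e :: l)) {P : Finset G}
    (hP : (P : Set G) ⊆ exchangeProducts f e (U - U.dedup) l) :
    UniqueMul (insert (f e) (U.toFinset.image f)) P (f e) (l.map f).prod := by
  intro d p hd hp hdp
  obtain ⟨R, hR, l', hl', rfl⟩ := hP hp
  obtain rfl | hd := mem_insert.1 hd
  · exact ⟨rfl, mul_left_cancel hdp⟩
  obtain ⟨a, ha, rfl⟩ := mem_image.1 hd
  exact absurd (h _ (cons_le_of_le_sub_dedup (Multiset.mem_toFinset.1 ha) hR) _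
    (hl'.cons_filler a) (by simpa using hdp)) Multiset.cons_ne_zero

theorem mul_subset_exchangeProducts_cons [DecidableEq G] {P : Finset G}
    (hP : (P : Set G) ⊆ exchangeProducts f e (U - U.dedup) l) :
    (↑(insert (f e) (U.toFinset.image f) * P) : Set G) ⊆ exchangeProducts f e U (e :: l) := by
  intro x hx
  obtain ⟨d, hd, p, hp, rfl⟩ := mem_mul.1 (mem_coe.1 hx)
  obtain rfl | hd := mem_insert.1 hd
  · exact exchangeProducts_mono tsub_le_self (mul_mem_exchangeProducts_cons (hP hp) e)
  obtain ⟨a, ha, rfl⟩ := mem_image.1 hd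
  obtain ⟨R, hR, l', hl', rfl⟩ := hP hp
  exact ⟨_, cons_le_of_le_sub_dedup (Multiset.mem_toFinset.1 ha) hR, _, hl'.cons_filler a, by simp⟩

/-- Each copy of `e` in `l` absorbs one layer `U.dedup` of `U`, multiplying the set of products
reached so far by a set of size `#U.dedup + 1`; rigidity makes Kemperman's inequality apply. -/
theorem ExchangeRigid.exists_card_add_one_le (h : ExchangeRigid f e U l) (heU : e ∉ U)
    (hf : Set.InjOn f (insert e {a | a ∈ U})) (hU : ∀ a, U.count a ≤ Multiset.count e l) :
    ∃ P : Finset G, ↑P ⊆ exchangeProducts f e U l ∧ (l.map f).prod ∈ P ∧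
      Multiset.card U + 1 ≤ #P := by
  classical
  induction l generalizing U with
  | nil =>
    obtain rfl : U = 0 := Multiset.eq_zero_of_forall_notMem fun a ha ↦
      (Multiset.count_pos.2 ha).ne' (Nat.le_zero.1 (by simpa using hU a))
    exact ⟨{1}, by simpa using ⟨0, le_rfl, [], .refl e [], rfl⟩, by simp, by simp⟩
  | cons b l ih =>
    obtain rfl | hb := eq_or_ne b e
    · have hsub : U - U.dedup ≤ U := tsub_le_self
      obtain ⟨P, hP, hl, hcard⟩ := ih (h.of_cons.mono hsub)
        (fun he ↦ heU (Multiset.mem_of_le hsub he))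
        (hf.mono (Set.insert_subset_insert fun a ha ↦ Multiset.mem_of_le hsub ha)) fun a ↦ by
          have ha := hU a
          rw [← Multiset.cons_coe, Multiset.count_cons_self] at ha
          rw [Multiset.count_sub, Multiset.count_dedup]
          split_ifs with haU
          · omega
          · simp [Multiset.count_eq_zero_of_notMem haU]
      have hlayer : #(insert (f b) (U.toFinset.image f)) = #U.toFinset + 1 := by
        rw [← image_insert, card_image_of_injOn (by simpa [Set.InjOn] using hf),
          card_insert_of_notMem (by simpa using heU)]
      have hkemperman := card_add_card_le_card_mul_add_one_of_uniqueMul (mem_insert_self _ _) hl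
        (h.uniqueMul hP)
      have hUcard : Multiset.card (U - U.dedup) + #U.toFinset = Multiset.card U := by
        rw [Multiset.card_toFinset, ← Multiset.card_add,
          tsub_add_cancel_of_le (Multiset.dedup_le U)]
      exact ⟨_, mul_subset_exchangeProducts_cons hP,
        by simpa using mul_mem_mul (mem_insert_self _ _) hl, by omega⟩
    · obtain ⟨P, hP, hl, hcard⟩ := ih h.of_cons heU hf (by simpa [hb] using hU)
      refine ⟨P.image (f b * ·), ?_, mem_image.2 ⟨_, hl, by simp⟩, ?_⟩
      · intro x hx
        obtain ⟨y, hy, rfl⟩ := mem_image.1 (mem_coe.1 hx)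
        exact mul_mem_exchangeProducts_cons (hP hy) b
      · rwa [card_image_of_injective _ (mul_right_injective (f b))]

theorem ExchangeRigid.exists_mul_eq_one [Fintype G] (h : ExchangeRigid f e U l) (heU : e ∉ U)
    (hf : Set.InjOn f (insert e {a | a ∈ U})) (hU : ∀ a, U.count a ≤ Multiset.count e l)
    (hcard : Fintype.card G ≤ Multiset.card U + 1) {c : G} (hc : c * (l.map f).prod = 1) (d : G) :
    ∃ x ∈ exchangeProducts f e U l, d * x = 1 := by
  classical
  obtain ⟨P, hP, hl, hPcard⟩ := h.exists_card_add_one_le heU hf hU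
  by_contra! hne
  have hdc : d ≠ c := by
    rintro rfl
    exact hne _ (hP hl) hc
  have huniq : UniqueMul {d, c} P c (l.map f).prod := by
    intro a x ha hx hax
    obtain rfl | rfl := mem_insert.1 ha |>.imp_right mem_singleton.1
    · exact absurd (hax.trans hc) (hne x (hP hx))
    · exact ⟨rfl, mul_left_cancel hax⟩
  have hkemperman := card_add_card_le_card_mul_add_one_of_uniqueMul (by simp) hl huniq
  have hle := card_le_univ ({d, c} * P)
  rw [card_pair hdc] at hkemperman
  omega

end Layer

end Exchange

/-! ### Weighted sequences over a group of order `n` -/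

section Weighted

variable {G : Type*}

/-- The total weight of a sequence of weighted terms: the term `(w, g)` stands for `g` with
weight `w`. -/
def weight (S : Multiset (ℕ × G)) : ℕ := (S.map Prod.fst).sum

/-- All terms have weight one, except that one term of weight two is allowed when `2 ≤ k`; encoded
by inequalities between the weight and the length. -/
def NearlyUnitWeight (k : ℕ) (S : Multiset (ℕ × G)) : Prop :=
  (∀ x ∈ S, 1 ≤ x.1) ∧ weight S ≤ Multiset.card S + 1 ∧ weight S < Multiset.card S + k

@[simp] theorem weight_zero : weight (0 : Multiset (ℕ × G)) = 0 := rfl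

@[simp] theorem weight_cons (x : ℕ × G) (S : Multiset (ℕ × G)) :
    weight (x ::ₘ S) = x.1 + weight S := by
  simp [weight]

@[simp] theorem weight_add (S T : Multiset (ℕ × G)) : weight (S + T) = weight S + weight T := by
  simp [weight]

@[simp] theorem weight_replicate (n : ℕ) (x : ℕ × G) :
    weight (Multiset.replicate n x) = n * x.1 := by
  simp [weight]

theorem weight_map {H : Type*} (S : Multiset (ℕ × H)) (f : H → G) :
    weight (S.map (Prod.map id f)) = weight S := by
  simp [weight, Multiset.map_map]

theorem card_le_weight_of_one_le {S : Multiset (ℕ × G)} (hS : ∀ x ∈ S, 1 ≤ x.1) :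
    Multiset.card S ≤ weight S := by
  simpa [weight] using Multiset.card_nsmul_le_sum (s := S.map Prod.fst) (a := 1) (by simpa using hS)

theorem weight_eq_card {S : Multiset (ℕ × G)} (hS : ∀ x ∈ S, x.1 = 1) :
    weight S = Multiset.card S := by
  simp [weight, Multiset.map_congr rfl hS]

theorem NearlyUnitWeight.card_le_weight {k : ℕ} {S : Multiset (ℕ × G)}
    (h : NearlyUnitWeight k S) : Multiset.card S ≤ weight S :=
  card_le_weight_of_one_le h.1

theorem nearlyUnitWeight_map {H : Type*} {k : ℕ} {S : Multiset (ℕ × H)} (f : H → G) :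
    NearlyUnitWeight k (S.map (Prod.map id f)) ↔ NearlyUnitWeight k S := by
  simp only [NearlyUnitWeight, weight_map, Multiset.card_map, Multiset.forall_mem_map_iff,
    Prod.map_fst, id]

theorem fst_eq_one_of_weight_le_card {S : Multiset (ℕ × G)} (hS : ∀ x ∈ S, 1 ≤ x.1)
    (h : weight S ≤ Multiset.card S) {x : ℕ × G} (hx : x ∈ S) : x.1 = 1 := by
  obtain ⟨T, rfl⟩ := Multiset.exists_cons_of_mem hx
  have hT := card_le_weight_of_one_le fun y hy ↦ hS y (Multiset.mem_cons_of_mem hy)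
  have h1 := hS x hx
  rw [weight_cons, Multiset.card_cons] at h
  omega

theorem NearlyUnitWeight.fst_eq_two_of_ne_one {k : ℕ} {j : ℕ × G} {S : Multiset (ℕ × G)}
    (h : NearlyUnitWeight k (j ::ₘ S)) (hj : j.1 ≠ 1) :
    j.1 = 2 ∧ 2 ≤ k ∧ ∀ x ∈ S, x.1 = 1 := by
  obtain ⟨hpos, hle, hlt⟩ := h
  have hposS : ∀ x ∈ S, 1 ≤ x.1 := fun x hx ↦ hpos x (Multiset.mem_cons_of_mem hx)
  have hS := card_le_weight_of_one_le hposS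
  have hj1 := hpos j (Multiset.mem_cons_self j S)
  rw [weight_cons, Multiset.card_cons] at hle hlt
  exact ⟨by omega, by omega, fun x ↦ fst_eq_one_of_weight_le_card hposS (by omega)⟩

theorem NearlyUnitWeight.weight_eq_card_add_one {k : ℕ} {j : ℕ × G} {S : Multiset (ℕ × G)}
    (h : NearlyUnitWeight k S) (hjS : j ∈ S) (hj : j.1 ≠ 1) : weight S = Multiset.card S + 1 := by
  obtain ⟨T, rfl⟩ := Multiset.exists_cons_of_mem hjS
  obtain ⟨hj2, -, hT⟩ := h.fst_eq_two_of_ne_one hj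
  rw [weight_cons, hj2, weight_eq_card hT, Multiset.card_cons]
  omega

theorem Exchange.weight_eq {e : ℕ × G} {l l' : List (ℕ × G)}
    {R : Multiset (ℕ × G)} (h : Exchange e l R l') (he : e.1 = 1) (hR : ∀ x ∈ R, x.1 = 1) :
    weight (l' : Multiset (ℕ × G)) = weight (l : Multiset (ℕ × G)) := by
  have := congrArg weight h
  rwa [weight_add, weight_add, weight_replicate, weight_eq_card hR, he, mul_one,
    Nat.add_right_cancel_iff] at this

theorem injOn_snd_of_fst_eq_one {e : ℕ × G} {U : Multiset (ℕ × G)} (he : e.1 = 1)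
    (hU : ∀ x ∈ U, x.1 = 1) : Set.InjOn Prod.snd (insert e {a | a ∈ U}) := by
  have hfst : ∀ x ∈ insert e {a | a ∈ U}, x.1 = 1 := by
    rintro x (rfl | hx)
    exacts [he, hU x hx]
  exact fun x hx y hy hxy ↦ Prod.ext ((hfst x hx).trans (hfst y hy).symm) hxy

end Weighted

section Rotation

variable {α : Type*}

theorem exists_le_card_eq {m : ℕ} {S : Multiset α} (h : m ≤ Multiset.card S) :
    ∃ T ≤ S, Multiset.card T = m := by
  obtain ⟨T, hT⟩ := Multiset.card_pos_iff_exists_mem.1 <|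
    (Nat.choose_pos h).trans_eq (Multiset.card_powersetCard m S).symm
  exact ⟨T, Multiset.mem_powersetCard.1 hT⟩

theorem exists_isRotated_cons_cons_of_mem {l : List α} {e x : α} (he : e ∈ l) (hx : x ∈ l)
    (hxe : x ≠ e) : ∃ y r, y ≠ e ∧ l.IsRotated (y :: e :: r) := by
  obtain ⟨s, t, rfl⟩ := List.append_of_mem hx
  have hes : e ∈ t ++ s := by simpa [hxe.symm, or_comm] using he
  obtain ⟨u, v, huv, heu⟩ := List.eq_append_cons_of_mem hes
  obtain ⟨u', y, hu'⟩ := List.eq_nil_or_concat (x :: u) |>.resolve_left (List.cons_ne_nil x u)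
  have hy : y ∈ x :: u := by simp [hu']
  refine ⟨y, v ++ u', ?_, ?_⟩
  · rintro rfl
    exact (List.mem_cons.1 hy).elim hxe.symm heu
  · have hsplit : x :: t ++ s = u' ++ y :: e :: v := by
      rw [List.cons_append, huv, ← List.cons_append, hu', List.concat_eq_append,
        List.append_assoc, List.singleton_append]
    exact List.isRotated_append.trans (hsplit ▸ List.isRotated_append)

theorem exists_isRotated_cons_cons_of_count_lt [DecidableEq α] {l : List α} {e : α} {m : ℕ}
    {U : Multiset α} (he : e ∈ l) (hUl : ∀ a, U.count a < Multiset.count e l)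
    (hmU : m ≤ Multiset.card U) (hml : m + 2 ≤ l.length) :
    ∃ y r, l.IsRotated (y :: e :: r) ∧
      ∃ V ≤ U, m ≤ Multiset.card V ∧ ∀ a, V.count a ≤ Multiset.count e r := by
  by_cases hl : ∃ x ∈ l, x ≠ e
  · obtain ⟨x, hx, hxe⟩ := hl
    obtain ⟨y, r, hye, hrot⟩ := exists_isRotated_cons_cons_of_mem he hx hxe
    refine ⟨y, r, hrot, U, le_rfl, hmU, fun a ↦ ?_⟩
    have hcount : Multiset.count e l = Multiset.count e r + 1 := by
      rw [Multiset.coe_eq_coe.2 hrot.perm, ← Multiset.cons_coe, Multiset.count_cons_of_ne hye.symm,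
        ← Multiset.cons_coe, Multiset.count_cons_self]
    have := hUl a
    omega
  · push Not at hl
    obtain ⟨n, hn⟩ := Nat.exists_eq_add_of_le' ((Nat.le_add_left 2 m).trans hml)
    have hl' : l = e :: e :: List.replicate n e := List.eq_replicate_iff.2 ⟨hn, hl⟩
    obtain ⟨V, hVU, hV⟩ := exists_le_card_eq hmU
    refine ⟨e, List.replicate n e, hl' ▸ List.IsRotated.refl l, V, hVU, hV.ge,
      fun a ↦ (Multiset.count_le_card a V).trans ?_⟩
    simp only [Multiset.coe_replicate, Multiset.count_replicate_self]
    omega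

end Rotation

section PaddedWord

open Finset

variable {G : Type*} [Group G] [DecidableEq G]

/-- A word `l` of weighted letters with total weight `t` and product one that is a subsequence of
`S`, except that it may use the filler letter `e` arbitrarily often. -/
structure IsPaddedWord (S : Multiset (ℕ × G)) (e : ℕ × G) (t : ℕ) (l : List (ℕ × G)) : Prop where
  weight_eq : weight (l : Multiset (ℕ × G)) = t
  prod_eq_one : (l.map Prod.snd).prod = 1
  count_le : ∀ a ≠ e, Multiset.count a l ≤ S.count a

variable {S R V : Multiset (ℕ × G)} {e j : ℕ × G} {t k : ℕ} {l l' : List (ℕ × G)}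

namespace IsPaddedWord

theorem coe_le (h : IsPaddedWord S e t l) (he : Multiset.count e l ≤ S.count e) :
    (l : Multiset (ℕ × G)) ≤ S := by
  refine Multiset.le_iff_count.2 fun a ↦ ?_
  obtain rfl | ha := eq_or_ne a e
  exacts [he, h.count_le a ha]

theorem tsub_add_coe (h : IsPaddedWord S e t l) (he : S.count e ≤ Multiset.count e l) :
    S - l + l = S + Multiset.replicate (Multiset.count e l - S.count e) e := by
  ext a
  simp only [Multiset.count_add, Multiset.count_sub, Multiset.count_replicate]
  obtain rfl | ha := eq_or_ne a e
  · rw [if_pos rfl]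
    omega
  · rw [if_neg ha.symm, tsub_add_cancel_of_le (h.count_le a ha), add_zero]

theorem weight_tsub_add (h : IsPaddedWord S e t l) (he1 : e.1 = 1)
    (he : S.count e ≤ Multiset.count e l) :
    weight (S - (l : Multiset (ℕ × G))) + t = weight S + (Multiset.count e l - S.count e) := by
  have := congrArg weight (h.tsub_add_coe he)
  rwa [weight_add, weight_add, weight_replicate, he1, mul_one, h.weight_eq] at this

theorem of_coe_le_add (h : IsPaddedWord S e t l) (hR : R ≤ S - l)
    (hle : (l' : Multiset (ℕ × G)) ≤ l + R) (hw : weight (l' : Multiset (ℕ × G)) = t)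
    (hprod : (l'.map Prod.snd).prod = 1) : IsPaddedWord S e t l' := by
  refine ⟨hw, hprod, fun a ha ↦ ?_⟩
  have hl' := Multiset.count_le_of_le a hle
  have hRa := Multiset.count_le_of_le a hR
  have hl := h.count_le a ha
  simp only [Multiset.count_add, Multiset.count_sub] at hl' hRa
  omega

theorem of_isRotated (h : IsPaddedWord S e t l) (hl : l.IsRotated l') :
    IsPaddedWord S e t l' := by
  refine h.of_coe_le_add (Multiset.zero_le _) (by simp [Multiset.coe_eq_coe.2 hl.perm]) ?_ ?_
  · rw [← h.weight_eq, Multiset.coe_eq_coe.2 hl.perm]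
  · obtain ⟨n, rfl⟩ := hl
    simpa only [List.map_rotate] using List.prod_rotate_eq_one_of_prod_eq_one h.prod_eq_one n

theorem exchange (h : IsPaddedWord S e t l) (he : e.1 = 1) (hR : R ≤ S - l)
    (hR1 : ∀ x ∈ R, x.1 = 1) (hl : Exchange e l R l')
    (hprod : (l'.map Prod.snd).prod = (l.map Prod.snd).prod) : IsPaddedWord S e t l' :=
  h.of_coe_le_add hR hl.coe_le_add ((hl.weight_eq he hR1).trans h.weight_eq)
    (hprod.trans h.prod_eq_one)

end IsPaddedWord

/-- The letter of weight two is inserted in place of two letters `y, e`: if its value differs from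
their product, this choice and the exchanges in `r` together are too many not to hit `1`. -/
theorem IsPaddedWord.exists_count_lt_of_isRotated [Fintype G] {y : ℕ × G} {r : List (ℕ × G)}
    (h : IsPaddedWord S e t (y :: e :: r)) (he1 : e.1 = 1) (hy1 : y.1 = 1) (hj : j.1 = 2)
    (hV : j ::ₘ V ≤ S - (y :: e :: r : List (ℕ × G))) (heV : e ∉ V) (hV1 : ∀ x ∈ V, x.1 = 1)
    (hVr : ∀ a, V.count a ≤ Multiset.count e r)
    (hcard : Fintype.card G ≤ Multiset.card V + 1) :
    ∃ l', IsPaddedWord S e t l' ∧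
      Multiset.count e l' < Multiset.count e (y :: e :: r : List (ℕ × G)) := by
  have hVS : V ≤ S - (y :: e :: r : List (ℕ × G)) := (Multiset.le_cons_self V j).trans hV
  have hw : y.1 + (e.1 + weight (r : Multiset (ℕ × G))) = t := by
    simpa only [← Multiset.cons_coe, weight_cons] using h.weight_eq
  by_cases hrigid : ExchangeRigid Prod.snd e V r
  · have hyer : y.2 * e.2 * (r.map Prod.snd).prod = 1 := by simpa [mul_assoc] using h.prod_eq_one
    obtain ⟨x, ⟨R, hR, r', hr', rfl⟩, hjx⟩ := hrigid.exists_mul_eq_one heV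
      (injOn_snd_of_fst_eq_one he1 hV1) hVr hcard hyer j.2
    have hR1 : ∀ x ∈ R, x.1 = 1 := fun x hx ↦ hV1 x (Multiset.mem_of_le hR hx)
    refine ⟨j :: r', h.of_coe_le_add (R := j ::ₘ R) ((Multiset.cons_le_cons j hR).trans hV)
      ?_ ?_ (by simpa using hjx), ?_⟩
    · simp only [← Multiset.cons_coe, Multiset.cons_add, Multiset.add_cons]
      exact Multiset.cons_le_cons j (hr'.coe_le_add.trans
        ((Multiset.le_cons_self _ e).trans (Multiset.le_cons_self _ y)))
    · rw [← Multiset.cons_coe, weight_cons, hr'.weight_eq he1 hR1]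
      omega
    · have hje : e ≠ j := by
        rintro rfl
        omega
      have := hr'.count_le
      simp only [← Multiset.cons_coe, Multiset.count_cons, if_neg hje, if_true]
      omega
  · simp only [ExchangeRigid, not_forall] at hrigid
    obtain ⟨R, hR, r', hr', hprod, hR0⟩ := hrigid
    have hexch := (hr'.cons e).cons y
    exact ⟨y :: e :: r', h.exchange he1 (hR.trans hVS)
      (fun x hx ↦ hV1 x (Multiset.mem_of_le hR hx)) hexch (by simp [hprod]),
      hexch.count_lt hR0 fun heR ↦ heV (Multiset.mem_of_le hR heR)⟩

/-- Without a letter of weight two to spare, the unused letters outnumber the group, so some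
exchange preserves the product. -/
theorem IsPaddedWord.exists_count_lt_of_forall_fst_eq_one [Fintype G] (h : IsPaddedWord S e t l)
    (he1 : e.1 = 1) (he : S.count e < Multiset.count e l)
    (hmax : ∀ a, a.1 = 1 → S.count a ≤ S.count e)
    (hU1 : ∀ x ∈ S - (l : Multiset (ℕ × G)), x.1 = 1)
    (hcard : Fintype.card G ≤ Multiset.card (S - (l : Multiset (ℕ × G)))) :
    ∃ l', IsPaddedWord S e t l' ∧ Multiset.count e l' < Multiset.count e l := by
  have heU : e ∉ S - (l : Multiset (ℕ × G)) := Multiset.mem_sub.not.2 he.le.not_gt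
  have hnot : ¬ ExchangeRigid Prod.snd e (S - l) l := by
    intro hrigid
    obtain ⟨P, -, -, hP⟩ := hrigid.exists_card_add_one_le heU
      (injOn_snd_of_fst_eq_one he1 hU1) fun a ↦ by
        by_cases ha : a ∈ S - (l : Multiset (ℕ × G))
        · have := hmax a (hU1 a ha)
          rw [Multiset.count_sub]
          omega
        · simp [Multiset.count_eq_zero_of_notMem ha]
    have := card_le_univ P
    omega
  simp only [ExchangeRigid, not_forall] at hnot
  obtain ⟨R, hR, l', hl', hprod, hR0⟩ := hnot
  exact ⟨l', h.exchange he1 hR (fun x hx ↦ hU1 x (Multiset.mem_of_le hR hx)) hl' hprod,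
    hl'.count_lt hR0 fun heR ↦ heU (Multiset.mem_of_le hR heR)⟩

theorem IsPaddedWord.fst_eq_one (h : IsPaddedWord S e t l) (he1 : e.1 = 1)
    (hS : NearlyUnitWeight k S) (hj : j ∈ S - (l : Multiset (ℕ × G))) (hj1 : j.1 ≠ 1)
    {x : ℕ × G} (hx : x ∈ l) : x.1 = 1 := by
  obtain ⟨S', rfl⟩ := Multiset.exists_cons_of_mem (Multiset.mem_of_le tsub_le_self hj)
  obtain ⟨-, -, hS'⟩ := hS.fst_eq_two_of_ne_one hj1
  obtain rfl | hxe := eq_or_ne x e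
  · exact he1
  have hxl : 0 < Multiset.count x l := Multiset.count_pos.2 hx
  have hxS := h.count_le x hxe
  obtain rfl | hxj := eq_or_ne x j
  · have hxl' := Multiset.mem_sub.1 hj
    rw [Multiset.count_cons_self,
      Multiset.count_eq_zero_of_notMem fun hxS' ↦ hj1 (hS' x hxS')] at hxl'
    omega
  · rw [Multiset.count_cons_of_ne hxj] at hxS
    exact hS' x (Multiset.count_pos.1 (hxl.trans_le hxS))

theorem IsPaddedWord.exists_count_lt_of_fst_ne_one [Fintype G]
    (h : IsPaddedWord S e (k * Fintype.card G) l) (hS : NearlyUnitWeight k S)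
    (hcard : k * Fintype.card G + Fintype.card G ≤ Multiset.card S + 1)
    (he1 : e.1 = 1) (hmax : ∀ a, a.1 = 1 → S.count a ≤ S.count e)
    (he : S.count e < Multiset.count e l) (hjU : j ∈ S - (l : Multiset (ℕ × G))) (hj1 : j.1 ≠ 1) :
    ∃ l', IsPaddedWord S e (k * Fintype.card G) l' ∧ Multiset.count e l' < Multiset.count e l := by
  have hweight := h.weight_tsub_add he1 he.le
  obtain ⟨U, hU⟩ := Multiset.exists_cons_of_mem hjU
  obtain ⟨S', hS'⟩ := Multiset.exists_cons_of_mem (Multiset.mem_of_le tsub_le_self hjU)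
  obtain ⟨hj2, hk, hS1⟩ := (hS' ▸ hS).fst_eq_two_of_ne_one hj1
  have hUS : U ≤ S' := by
    rw [← Multiset.cons_le_cons_iff j, ← hU, ← hS']
    exact tsub_le_self
  have hU1 : ∀ x ∈ U, x.1 = 1 := fun x hx ↦ hS1 x (Multiset.mem_of_le hUS hx)
  have hUl : ∀ a, U.count a < Multiset.count e l := fun a ↦ by
    by_cases ha : a ∈ U
    · have := Multiset.count_le_of_le a (hUS.trans (hS' ▸ Multiset.le_cons_self S' j))
      exact (this.trans (hmax a (hU1 a ha))).trans_lt he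
    · rw [Multiset.count_eq_zero_of_notMem ha]
      omega
  have hl1 : ∀ x ∈ (l : Multiset (ℕ × G)), x.1 = 1 := fun x ↦ h.fst_eq_one he1 hS hjU hj1
  have hlength : l.length = k * Fintype.card G := by
    rw [← h.weight_eq, weight_eq_card hl1, Multiset.coe_card]
  have hweightS := hS.weight_eq_card_add_one (Multiset.mem_of_le tsub_le_self hjU) hj1
  rw [hU, weight_cons, hj2, weight_eq_card hU1] at hweight
  have hpos : 0 < Fintype.card G := Fintype.card_pos
  have hml : Fintype.card G - 1 + 2 ≤ l.length := by
    have := Nat.mul_le_mul_right (Fintype.card G) hk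
    omega
  obtain ⟨y, r, hrot, V, hVU, hV, hVr⟩ := exists_isRotated_cons_cons_of_count_lt
    (Multiset.count_pos.1 ((Nat.zero_le _).trans_lt he)) hUl (m := Fintype.card G - 1) (by omega)
    hml
  have hcoe : (l : Multiset (ℕ × G)) = (y :: e :: r : List (ℕ × G)) :=
    Multiset.coe_eq_coe.2 hrot.perm
  rw [hcoe]
  exact (h.of_isRotated hrot).exists_count_lt_of_isRotated he1 (hl1 y (by simp [hcoe])) hj2
    (by rw [← hcoe, hU]; exact Multiset.cons_le_cons j hVU)
    (fun heV ↦ Multiset.mem_sub.not.2 he.le.not_gt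
      (hU ▸ Multiset.mem_cons_of_mem (Multiset.mem_of_le hVU heV)))
    (fun x hx ↦ hU1 x (Multiset.mem_of_le hVU hx)) hVr (by omega)

theorem IsPaddedWord.exists_count_lt [Fintype G] (h : IsPaddedWord S e (k * Fintype.card G) l)
    (hS : NearlyUnitWeight k S) (hcard : k * Fintype.card G + Fintype.card G ≤ Multiset.card S + 1)
    (he1 : e.1 = 1) (hmax : ∀ a, a.1 = 1 → S.count a ≤ S.count e)
    (he : S.count e < Multiset.count e l) :
    ∃ l', IsPaddedWord S e (k * Fintype.card G) l' ∧ Multiset.count e l' < Multiset.count e l := by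
  by_cases hU : ∀ x ∈ S - (l : Multiset (ℕ × G)), x.1 = 1
  · have hweight := h.weight_tsub_add he1 he.le
    have hcardS := hS.card_le_weight
    rw [weight_eq_card hU] at hweight
    exact h.exists_count_lt_of_forall_fst_eq_one he1 he hmax hU (by omega)
  · push Not at hU
    obtain ⟨j, hjU, hj1⟩ := hU
    exact h.exists_count_lt_of_fst_ne_one hS hcard he1 hmax he hjU hj1

end PaddedWord

section ForcesProductOne

variable {G : Type*}

/-- Some terms of `S` of total weight `t` have product one in a suitable order. -/
def HasProductOneOfWeight [Monoid G] (S : Multiset (ℕ × G)) (t : ℕ) : Prop :=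
  ∃ l : List (ℕ × G), (l : Multiset (ℕ × G)) ≤ S ∧ weight (l : Multiset (ℕ × G)) = t ∧
    (l.map Prod.snd).prod = 1

/-- Among any `k * M + A` terms with values in `K`, all of weight one up to the exception admitted
by `NearlyUnitWeight k`, some terms of total weight `k * M` have product one in a suitable order. -/
def ForcesProductOne [Monoid G] (K : Set G) (M A : ℕ) : Prop :=
  ∀ (k : ℕ) (S : Multiset (ℕ × G)), (∀ x ∈ S, x.2 ∈ K) → NearlyUnitWeight k S →
    k * M + A ≤ Multiset.card S → HasProductOneOfWeight S (k * M)

theorem HasProductOneOfWeight.mono [Monoid G] {S T : Multiset (ℕ × G)} {t : ℕ}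
    (h : HasProductOneOfWeight S t) (hST : S ≤ T) : HasProductOneOfWeight T t :=
  let ⟨l, hl, hw, hprod⟩ := h
  ⟨l, hl.trans hST, hw, hprod⟩

theorem HasProductOneOfWeight.map [Monoid G] {H : Type*} [Monoid H] {S : Multiset (ℕ × H)} {t : ℕ}
    (h : HasProductOneOfWeight S t) (φ : H →* G) :
    HasProductOneOfWeight (S.map (Prod.map id φ)) t := by
  obtain ⟨l, hlS, hw, hl⟩ := h
  refine ⟨l.map (Prod.map id φ), by simpa using Multiset.map_le_map hlS, ?_, ?_⟩
  · rw [← Multiset.map_coe, weight_map, hw]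
  · simpa [hl, Function.comp_def] using (map_list_prod φ (l.map Prod.snd)).symm

theorem NearlyUnitWeight.hasProductOneOfWeight [Group G] [Fintype G] {k : ℕ} {S : Multiset (ℕ × G)}
    (hS : NearlyUnitWeight k S)
    (hcard : k * Fintype.card G + Fintype.card G ≤ Multiset.card S + 1) :
    HasProductOneOfWeight S (k * Fintype.card G) := by
  classical
  obtain ⟨g, hg⟩ := Finite.exists_max fun g : G ↦ S.count (1, g)
  have hmax : ∀ a : ℕ × G, a.1 = 1 → S.count a ≤ S.count (1, g) := by
    rintro ⟨_, a⟩ rfl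
    exact hg a
  have hpow : IsPaddedWord S (1, g) (k * Fintype.card G)
      (List.replicate (k * Fintype.card G) (1, g)) :=
    ⟨by simp [Multiset.coe_replicate], by simp [mul_comm k, pow_mul],
      fun a ha ↦ by simp [Multiset.coe_replicate, Multiset.count_replicate, ha.symm]⟩
  obtain ⟨l, hl, hmin⟩ := WellFounded.has_min
    (measure fun l : List (ℕ × G) ↦ Multiset.count (1, g) l).wf
    {l | IsPaddedWord S (1, g) (k * Fintype.card G) l} ⟨_, hpow⟩
  refine ⟨l, hl.coe_le (not_lt.1 fun hlt ↦ ?_), hl.weight_eq, hl.prod_eq_one⟩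
  obtain ⟨l', hl', hlt'⟩ := hl.exists_count_lt hS hcard rfl hmax hlt
  exact hmin l' hl' hlt'

theorem forcesProductOne_subgroup [Group G] (K : Subgroup G) [Finite K] :
    ForcesProductOne (K : Set G) (Nat.card K) (Nat.card K - 1) := by
  intro k S hSK hS hcard
  have := Fintype.ofFinite K
  rw [Nat.card_eq_fintype_card] at hcard ⊢
  have hpos : 0 < Fintype.card K := Fintype.card_pos
  let S' : Multiset (ℕ × K) := S.pmap (fun x hx ↦ (x.1, ⟨x.2, hx⟩)) hSK
  have hS' : S'.map (Prod.map id K.subtype) = S := by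
    simp [S', Multiset.map_pmap, Multiset.pmap_eq_map]
  have hunit : NearlyUnitWeight k S' := by
    rwa [← hS', nearlyUnitWeight_map] at hS
  exact hS' ▸ (hunit.hasProductOneOfWeight (by simp [S']; omega)).map K.subtype

end ForcesProductOne

/-! ### Zero-sum subsequences over `C_p ^ r` -/

section Indicator

open Finset

variable {ι R : Type*} [DecidableEq ι] [CommRing R]

theorem sum_powerset_neg_one_pow_card_mul_eval (q : MvPolynomial ι R) {J : Finset ι}
    (hq : q.totalDegree < #J) :
    ∑ I ∈ J.powerset, (-1) ^ #I * MvPolynomial.eval (fun i ↦ if i ∈ I then 1 else 0) q = 0 := by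
  have hmonomial : ∀ d ∈ q.support, ∑ I ∈ J.powerset,
      (-1 : R) ^ #I * ∏ i ∈ d.support, (if i ∈ I then 1 else 0) ^ d i = 0 := by
    intro d hd
    obtain ⟨j, hjJ, hj⟩ : ∃ j ∈ J, j ∉ d.support := by
      refine exists_mem_notMem_of_card_lt_card (hq.trans_le' ?_)
      refine le_trans ?_ (MvPolynomial.le_totalDegree hd)
      simpa [Finsupp.sum] using card_nsmul_le_sum d.support d 1 fun i hi ↦
        Nat.one_le_iff_ne_zero.2 (Finsupp.mem_support_iff.1 hi)
    rw [← insert_erase hjJ, sum_powerset_insert (notMem_erase j J), ← sum_add_distrib]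
    refine sum_eq_zero fun I hI ↦ ?_
    have hjI : j ∉ I := fun h ↦ notMem_erase j J (mem_powerset.1 hI h)
    have hprod : ∏ i ∈ d.support, (if i ∈ insert j I then (1 : R) else 0) ^ d i =
        ∏ i ∈ d.support, (if i ∈ I then 1 else 0) ^ d i :=
      prod_congr rfl fun i hi ↦ by simp [mem_insert, (ne_of_mem_of_not_mem hi hj)]
    rw [hprod, card_insert_of_notMem hjI]
    ring
  simp_rw [MvPolynomial.eval_eq, mul_sum, mul_left_comm ((-1 : R) ^ _)]
  rw [sum_comm]
  refine sum_eq_zero fun d hd ↦ ?_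
  rw [← mul_sum, hmonomial d hd, mul_zero]

theorem eval_esymm_indicator {I J : Finset ι} (hIJ : I ⊆ J) (s : ℕ) :
    MvPolynomial.eval (fun i ↦ if i ∈ I then (1 : R) else 0)
      (∑ L ∈ J.powersetCard s, ∏ i ∈ L, MvPolynomial.X i) = (#I).choose s := by
  simp only [map_sum, map_prod, MvPolynomial.eval_X, prod_ite_zero, prod_const_one,
    ← card_powersetCard]
  rw [sum_boole]
  congr 2
  ext L
  simp only [mem_filter, mem_powersetCard]
  exact ⟨fun h ↦ ⟨h.2, h.1.2⟩, fun h ↦ ⟨⟨h.1.trans hIJ, h.2⟩, h.1⟩⟩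

theorem eval_linear_indicator {I J : Finset ι} (hIJ : I ⊆ J) (a : ι → R) :
    MvPolynomial.eval (fun i ↦ if i ∈ I then (1 : R) else 0)
      (∑ i ∈ J, MvPolynomial.C (a i) * MvPolynomial.X i) = ∑ i ∈ I, a i := by
  simp [inter_eq_right.2 hIJ]

end Indicator

section ZeroSum

open Finset

variable {ι κ : Type*} {p : ℕ} [Fact p.Prime]

theorem prod_one_sub_pow_eq_ite [Fintype κ] (x : κ → ZMod p) :
    ∏ k, (1 - x k ^ (p - 1)) = if x = 0 then 1 else 0 := by
  split_ifs with hx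
  · simp [hx, zero_pow (Nat.sub_ne_zero_of_lt (Fact.out : p.Prime).one_lt)]
  · obtain ⟨k, hk⟩ := Function.ne_iff.1 hx
    exact prod_eq_zero (mem_univ k) (by rw [ZMod.pow_card_sub_one_eq_one hk, sub_self])

theorem sum_neg_one_pow_card_mul_choose [Fintype κ] (v : ι → κ → ZMod p) {J : Finset ι} {s : ℕ}
    (h : s + Fintype.card κ * (p - 1) < #J) :
    ∑ I ∈ J.powerset with ∑ i ∈ I, v i = 0, (-1) ^ #I * ((#I).choose s : ZMod p) = 0 := by
  classical
  set lin : κ → MvPolynomial ι (ZMod p) := fun k ↦ ∑ i ∈ J, .C (v i k) * .X i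
  set q : MvPolynomial ι (ZMod p) :=
    (∑ L ∈ J.powersetCard s, ∏ i ∈ L, .X i) * ∏ k, (1 - lin k ^ (p - 1)) with hqdef
  have hq : q.totalDegree < #J := by
    refine (MvPolynomial.totalDegree_mul _ _).trans_lt (h.trans_le' (add_le_add ?_ ?_))
    · refine MvPolynomial.totalDegree_finsetSum_le fun L hL ↦
        (MvPolynomial.totalDegree_finsetProd _ _).trans ?_
      simp [MvPolynomial.totalDegree_X, (mem_powersetCard.1 hL).2]
    · refine (MvPolynomial.totalDegree_finsetProd _ _).trans ?_
      refine (sum_le_card_nsmul _ _ (p - 1) fun k _ ↦ ?_).trans_eq (by simp)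
      refine (MvPolynomial.totalDegree_sub _ _).trans (max_le (by simp) ?_)
      refine (MvPolynomial.totalDegree_pow _ _).trans (mul_le_of_le_one_right' ?_)
      refine MvPolynomial.totalDegree_finsetSum_le fun i _ ↦ ?_
      refine (MvPolynomial.totalDegree_mul _ _).trans ?_
      simp
  refine (sum_filter _ _).trans <| (sum_congr rfl fun I hI ↦ ?_).trans
    (sum_powerset_neg_one_pow_card_mul_eval q hq)
  rw [hqdef, map_mul, eval_esymm_indicator (mem_powerset.1 hI), map_prod]
  simp only [map_sub, map_one, map_pow, lin, eval_linear_indicator (mem_powerset.1 hI),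
    ← Finset.sum_apply, prod_one_sub_pow_eq_ite, mul_ite, mul_one, mul_zero]

theorem exists_nonempty_sum_eq_zero [Fintype κ] (v : ι → κ → ZMod p) {J : Finset ι}
    (h : Fintype.card κ * (p - 1) < #J) : ∃ I ⊆ J, I.Nonempty ∧ ∑ i ∈ I, v i = 0 := by
  classical
  by_contra! hne
  have hfilter : {I ∈ J.powerset | ∑ i ∈ I, v i = 0} = {∅} := by
    ext I
    simp only [mem_filter, mem_powerset, mem_singleton]
    constructor
    · rintro ⟨hI, hsum⟩
      exact not_nonempty_iff_eq_empty.1 fun hI' ↦ hne I hI hI' hsum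
    · rintro rfl
      simp
  simpa [hfilter] using sum_neg_one_pow_card_mul_choose v (s := 0) (J := J) (by simpa using h)

end ZeroSum

section Kemnitz

open Finset

variable {ι M : Type*} [AddCommMonoid M] [DecidableEq M]

/-- The zero-sum subsequences of length `s` of the sequence `f` indexed by `J`. -/
def zeroSumSubsets (f : ι → M) (J : Finset ι) (s : ℕ) : Finset (Finset ι) :=
  {I ∈ J.powersetCard s | ∑ i ∈ I, f i = 0}

variable {f : ι → M} {I J : Finset ι} {s : ℕ}

theorem mem_zeroSumSubsets :
    I ∈ zeroSumSubsets f J s ↔ I ⊆ J ∧ #I = s ∧ ∑ i ∈ I, f i = 0 := by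
  simp [zeroSumSubsets, and_assoc]

theorem zeroSumSubsets_zero : zeroSumSubsets f J 0 = {∅} := by
  simp [zeroSumSubsets, filter_singleton]

theorem zeroSumSubsets_mono {D : Finset ι} (h : D ⊆ J) (s : ℕ) :
    zeroSumSubsets f D s ⊆ zeroSumSubsets f J s :=
  filter_subset_filter _ (powersetCard_mono h)

theorem zeroSumSubsets_map {κ : Type*} (g : κ ↪ ι) (J : Finset κ) (s : ℕ) :
    zeroSumSubsets f (J.map g) s =
      (zeroSumSubsets (f ∘ g) J s).map (mapEmbedding g).toEmbedding := by
  simp [zeroSumSubsets, powersetCard_map, filter_map]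

variable [DecidableEq ι]

theorem card_zeroSumSubsets_insert {z : ι} (hz : z ∉ J) (hfz : f z = 0) (s : ℕ) :
    #(zeroSumSubsets f (insert z J) (s + 1)) =
      #(zeroSumSubsets f J (s + 1)) + #(zeroSumSubsets f J s) := by
  have hzI : ∀ I ∈ zeroSumSubsets f J s, z ∉ I := fun I hI hzI ↦
    hz ((mem_zeroSumSubsets.1 hI).1 hzI)
  have hinj : Set.InjOn (insert z) (zeroSumSubsets f J s : Set (Finset ι)) := fun I hI I' hI' h ↦ by
    rw [← erase_insert (hzI I hI), h, erase_insert (hzI I' hI')]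
  have hsplit : zeroSumSubsets f (insert z J) (s + 1) =
      zeroSumSubsets f J (s + 1) ∪ (zeroSumSubsets f J s).image (insert z) := by
    rw [zeroSumSubsets, powersetCard_succ_insert hz, filter_union, filter_image]
    refine congrArg₂ _ rfl (congrArg _ (filter_congr fun I hI ↦ ?_))
    rw [sum_insert fun hzI ↦ hz ((mem_powersetCard.1 hI).1 hzI), hfz, zero_add]
  rw [hsplit, card_union_of_disjoint, card_image_of_injOn hinj]
  refine disjoint_left.2 fun I hI hI' ↦ ?_
  obtain ⟨I', -, rfl⟩ := mem_image.1 hI'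
  exact hz ((mem_zeroSumSubsets.1 hI).1 (mem_insert_self z I'))

theorem sdiff_mem_zeroSumSubsets {t : ℕ} {B D : Finset ι} (hD : D ∈ zeroSumSubsets f J t)
    (hB : B ∈ zeroSumSubsets f D s) : D \ B ∈ zeroSumSubsets f J (t - s) := by
  obtain ⟨hDJ, hDcard, hDsum⟩ := mem_zeroSumSubsets.1 hD
  obtain ⟨hBD, hBcard, hBsum⟩ := mem_zeroSumSubsets.1 hB
  refine mem_zeroSumSubsets.2 ⟨sdiff_subset.trans hDJ, ?_, ?_⟩
  · rw [card_sdiff_of_subset hBD, hDcard, hBcard]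
  · rw [← hDsum, ← sum_sdiff hBD, hBsum, add_zero]

theorem sum_card_zeroSumSubsets_sdiff (f : ι → M) (J : Finset ι) (s t : ℕ) :
    ∑ A ∈ zeroSumSubsets f J s, #(zeroSumSubsets f (J \ A) t) =
      ∑ D ∈ zeroSumSubsets f J (s + t), #(zeroSumSubsets f D t) := by
  rw [← card_sigma, ← card_sigma]
  refine card_nbij' (fun x ↦ ⟨x.1 ∪ x.2, x.2⟩) (fun x ↦ ⟨x.1 \ x.2, x.2⟩) ?_ ?_ ?_ ?_
  · rintro ⟨A, B⟩ h
    obtain ⟨hA, hB⟩ := mem_sigma.1 h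
    obtain ⟨hAJ, hAcard, hAsum⟩ := mem_zeroSumSubsets.1 hA
    obtain ⟨hBJ, hBcard, hBsum⟩ := mem_zeroSumSubsets.1 hB
    obtain ⟨hBJ, hAB⟩ := subset_sdiff.1 hBJ
    refine mem_sigma.2 ⟨mem_zeroSumSubsets.2 ⟨union_subset hAJ hBJ, ?_, ?_⟩,
      mem_zeroSumSubsets.2 ⟨subset_union_right, hBcard, hBsum⟩⟩
    · rw [card_union_of_disjoint hAB.symm, hAcard, hBcard]
    · rw [sum_union hAB.symm, hAsum, hBsum, add_zero]
  · rintro ⟨D, B⟩ h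
    obtain ⟨hD, hB⟩ := mem_sigma.1 h
    obtain ⟨hBD, hBcard, hBsum⟩ := mem_zeroSumSubsets.1 hB
    have hsdiff := sdiff_mem_zeroSumSubsets hD hB
    rw [Nat.add_sub_cancel_right] at hsdiff
    refine mem_sigma.2 ⟨hsdiff, mem_zeroSumSubsets.2 ⟨subset_sdiff.2 ⟨?_, disjoint_sdiff⟩,
      hBcard, hBsum⟩⟩
    exact hBD.trans (mem_zeroSumSubsets.1 hD).1
  · rintro ⟨A, B⟩ h
    have hAB := (subset_sdiff.1 (mem_zeroSumSubsets.1 (mem_sigma.1 h).2).1).2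
    exact Sigma.ext (union_sdiff_cancel_right hAB.symm) HEq.rfl
  · rintro ⟨D, B⟩ h
    exact Sigma.ext (sdiff_union_of_subset (mem_zeroSumSubsets.1 (mem_sigma.1 h).2).1) HEq.rfl

end Kemnitz

section KemnitzPrime

open Finset

variable {ι : Type*} {p : ℕ} [Fact p.Prime] {f : ι → Fin 2 → ZMod p} {J : Finset ι}

theorem sum_range_neg_one_pow_mul_card_zeroSumSubsets {n s : ℕ} (hn : #J < n * p)
    (hs : s + 3 * (p - 1) < #J) :
    ∑ k ∈ range n, (-1) ^ k * ((k * p).choose s : ZMod p) * #(zeroSumSubsets f J (k * p)) = 0 := by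
  classical
  have hp : 0 < p := (Fact.out : p.Prime).pos
  have hcons : ∀ I : Finset ι, ∑ i ∈ I, (Fin.cons 1 (f i) : Fin 3 → ZMod p) = 0 ↔
      p ∣ #I ∧ ∑ i ∈ I, f i = 0 := fun I ↦ by
    simp [funext_iff, Fin.forall_fin_succ, ZMod.natCast_eq_zero_iff]
  rw [← sum_neg_one_pow_card_mul_choose (fun i ↦ (Fin.cons 1 (f i) : Fin 3 → ZMod p))
    (by simpa using hs),
    ← sum_fiberwise_of_maps_to (t := range n) (g := fun I ↦ #I / p)]
  · refine sum_congr rfl fun k _ ↦ ?_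
    have hfiber : {I ∈ {I ∈ J.powerset | ∑ i ∈ I, (Fin.cons 1 (f i) : Fin 3 → ZMod p) = 0} |
        #I / p = k} = zeroSumSubsets f J (k * p) := by
      ext I
      simp only [mem_filter, mem_powerset, hcons, mem_zeroSumSubsets]
      constructor
      · rintro ⟨⟨hI, hdvd, hsum⟩, rfl⟩
        exact ⟨hI, (Nat.div_mul_cancel hdvd).symm, hsum⟩
      · rintro ⟨hI, hcard, hsum⟩
        exact ⟨⟨hI, Dvd.intro_left k hcard.symm, hsum⟩, by rw [hcard, Nat.mul_div_cancel k hp]⟩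
    rw [hfiber, mul_comm, ← nsmul_eq_mul, ← sum_const]
    refine sum_congr rfl fun I hI ↦ ?_
    rw [(mem_zeroSumSubsets.1 hI).2.1, mul_comm k p, pow_mul, ZMod.pow_card]
  · intro I hI
    rw [mem_range, Nat.div_lt_iff_lt_mul hp]
    exact (card_le_card (mem_powerset.1 (mem_filter.1 hI).1)).trans_lt hn

theorem natCast_choose_mul_self (k : ℕ) : ((k * p).choose p : ZMod p) = k := by
  have hp : 0 < p := (Fact.out : p.Prime).pos
  have := (ZMod.natCast_eq_natCast_iff _ _ _).2
    (Choose.choose_modEq_choose_mod_mul_choose_div_nat (n := k * p) (k := p) (p := p))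
  simpa [Nat.mul_div_cancel k hp, Nat.div_self hp] using this

theorem card_zeroSumSubsets_two_mul {D : Finset ι} (hfree : zeroSumSubsets f D p = ∅)
    (hD : 3 * (p - 1) < #D) (hD' : #D < 3 * p) : (#(zeroSumSubsets f D (2 * p)) : ZMod p) = -1 := by
  have : (1 : ZMod p) + #(zeroSumSubsets f D (2 * p)) = 0 := by
    simpa [sum_range_succ, hfree, zeroSumSubsets_zero] using
      sum_range_neg_one_pow_mul_card_zeroSumSubsets (f := f) (s := 0) hD' (by simpa using hD)
  linear_combination this

theorem zeroSumSubsets_three_mul_eq_empty (hfree : zeroSumSubsets f J p = ∅) :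
    zeroSumSubsets f J (3 * p) = ∅ := by
  classical
  have hp : 0 < p := (Fact.out : p.Prime).pos
  refine eq_empty_of_forall_notMem fun D hD ↦ ?_
  obtain ⟨hDJ, hDcard, -⟩ := mem_zeroSumSubsets.1 hD
  obtain ⟨i, hi⟩ := card_pos.1 (show 0 < #D by omega)
  have hD'card : #(D.erase i) = 3 * p - 1 := by rw [card_erase_of_mem hi, hDcard]
  have hD' := card_zeroSumSubsets_two_mul (f := f) (D := D.erase i)
    (subset_empty.1 (hfree ▸ zeroSumSubsets_mono ((erase_subset i D).trans hDJ) p))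
    (by omega) (by omega)
  obtain ⟨B, hB⟩ : (zeroSumSubsets f (D.erase i) (2 * p)).Nonempty := by
    refine nonempty_iff_ne_empty.2 fun h ↦ ?_
    simp [h] at hD'
  have := sdiff_mem_zeroSumSubsets hD (zeroSumSubsets_mono (erase_subset i D) _ hB)
  rw [show 3 * p - 2 * p = p by omega, hfree] at this
  exact notMem_empty _ this

theorem card_zeroSumSubsets_sub_one (hfree : zeroSumSubsets f J p = ∅) (hJ : #J = 4 * p - 3) :
    (#(zeroSumSubsets f J (p - 1)) : ZMod p) = #(zeroSumSubsets f J (3 * p - 1)) := by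
  classical
  have hp : 2 ≤ p := (Fact.out : p.Prime).two_le
  have hone : ∀ D ⊆ J, 3 * (p - 1) < #D → #D < 3 * p →
      (#(zeroSumSubsets f D (2 * p)) : ZMod p) = -1 := fun D hD ↦
    card_zeroSumSubsets_two_mul (subset_empty.1 (hfree ▸ zeroSumSubsets_mono hD p))
  have hleft : ∀ A ∈ zeroSumSubsets f J (p - 1),
      (#(zeroSumSubsets f (J \ A) (2 * p)) : ZMod p) = -1 := fun A hA ↦ by
    obtain ⟨hAJ, hAcard, -⟩ := mem_zeroSumSubsets.1 hA
    have := card_sdiff_of_subset hAJ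
    exact hone _ sdiff_subset (by omega) (by omega)
  have hright : ∀ D ∈ zeroSumSubsets f J (p - 1 + 2 * p),
      (#(zeroSumSubsets f D (2 * p)) : ZMod p) = -1 := fun D hD ↦ by
    obtain ⟨hDJ, hDcard, -⟩ := mem_zeroSumSubsets.1 hD
    exact hone D hDJ (by omega) (by omega)
  have hcount := congrArg (Nat.cast : ℕ → ZMod p)
    (sum_card_zeroSumSubsets_sdiff f J (p - 1) (2 * p))
  rw [Nat.cast_sum, Nat.cast_sum, sum_congr rfl hleft, sum_congr rfl hright] at hcount
  rw [show 3 * p - 1 = p - 1 + 2 * p by omega]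
  simpa using hcount

theorem zeroSumSubsets_nonempty_of_ne_two {z : ι} (hz : z ∉ J) (hfz : f z = 0)
    (hJ : #J = 4 * p - 3) (hp2 : p ≠ 2) : (zeroSumSubsets f J p).Nonempty := by
  classical
  by_contra hfree
  rw [not_nonempty_iff_eq_empty] at hfree
  have hp : 2 ≤ p := (Fact.out : p.Prime).two_le
  have hz1 := card_zeroSumSubsets_insert hz hfz (p - 1)
  have hz3 := card_zeroSumSubsets_insert hz hfz (3 * p - 1)
  rw [Nat.sub_add_cancel (by omega), hfree, card_empty, zero_add] at hz1
  rw [Nat.sub_add_cancel (by omega), zeroSumSubsets_three_mul_eq_empty hfree, card_empty,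
    zero_add] at hz3
  have hcard : #(insert z J) = 4 * p - 2 := by rw [card_insert_of_notMem hz]; omega
  have h0 : (1 : ZMod p) - #(zeroSumSubsets f J (p - 1)) +
      #(zeroSumSubsets f (insert z J) (2 * p)) - #(zeroSumSubsets f J (3 * p - 1)) = 0 := by
    simpa [sum_range_succ, zeroSumSubsets_zero, hz1, hz3, ← sub_eq_add_neg, pow_succ] using
      sum_range_neg_one_pow_mul_card_zeroSumSubsets (f := f) (J := insert z J) (n := 4) (s := 0)
        (by omega) (by omega)
  have hp0 : (-#(zeroSumSubsets f J (p - 1)) : ZMod p) +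
      2 * #(zeroSumSubsets f (insert z J) (2 * p)) - 3 * #(zeroSumSubsets f J (3 * p - 1)) = 0 := by
    simpa [sum_range_succ, hz1, hz3, ← sub_eq_add_neg, pow_succ, natCast_choose_mul_self] using
      sum_range_neg_one_pow_mul_card_zeroSumSubsets (f := f) (J := insert z J) (n := 4) (s := p)
        (by omega) (by omega)
  have hsub := card_zeroSumSubsets_sub_one hfree hJ
  have h2 : (2 : ZMod p) = 0 := by linear_combination 2 * h0 - hp0 + hsub
  exact hp2 ((Nat.prime_dvd_prime_iff_eq Fact.out Nat.prime_two).1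
    ((ZMod.natCast_eq_zero_iff 2 p).1 h2))

theorem zeroSumSubsets_two_nonempty {f : ι → Fin 2 → ZMod 2} (hJ : #J = 5) :
    (zeroSumSubsets f J 2).Nonempty := by
  classical
  obtain ⟨i, hi, j, hj, hij, hf⟩ := exists_ne_map_eq_of_card_lt_of_maps_to
    (t := (univ : Finset (Fin 2 → ZMod 2))) (s := J) (f := f) (by simp [hJ])
    fun i _ ↦ mem_univ (f i)
  refine ⟨{i, j}, mem_zeroSumSubsets.2 ⟨insert_subset hi (singleton_subset_iff.2 hj),
    card_pair hij, ?_⟩⟩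
  rw [sum_pair hij, hf]
  exact funext fun k ↦ CharTwo.add_self_eq_zero _

/-- Reiher's theorem (the Kemnitz conjecture) for primes. -/
theorem zeroSumSubsets_nonempty (hJ : #J = 4 * p - 3) : (zeroSumSubsets f J p).Nonempty := by
  obtain rfl | hp2 := eq_or_ne p 2
  · exact zeroSumSubsets_two_nonempty hJ
  -- The counting argument needs a zero term outside the sequence, supplied by `Option`.
  have hsome := zeroSumSubsets_nonempty_of_ne_two (f := fun i : Option ι ↦ i.elim 0 f)
    (J := J.map .some) (z := none) (by simp) rfl (by simpa using hJ) hp2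
  rwa [zeroSumSubsets_map, map_nonempty] at hsome

end KemnitzPrime

section Multiset

variable {α : Type*} {p : ℕ} [Fact p.Prime]

theorem exists_le_sum_map_eq_zero {κ : Type*} [Fintype κ] (v : α → κ → ZMod p) {S : Multiset α}
    (h : Fintype.card κ * (p - 1) < Multiset.card S) :
    ∃ T ≤ S, T ≠ 0 ∧ (T.map v).sum = 0 := by
  classical
  obtain ⟨I, hI, hne, hsum⟩ := exists_nonempty_sum_eq_zero (fun x : α × ℕ ↦ v x.1)
    (J := S.toEnumFinset) (by simpa using h)
  refine ⟨I.val.map Prod.fst, Multiset.map_fst_le_of_subset_toEnumFinset hI, ?_,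
    by simpa [Multiset.map_map] using hsum⟩
  simpa using hne.ne_empty

theorem exists_le_card_eq_sum_map_eq_zero (f : α → Fin 2 → ZMod p) {S : Multiset α}
    (h : 4 * p - 3 ≤ Multiset.card S) :
    ∃ T ≤ S, Multiset.card T = p ∧ (T.map f).sum = 0 := by
  classical
  obtain ⟨V, hVS, hV⟩ := exists_le_card_eq h
  obtain ⟨I, hI⟩ := zeroSumSubsets_nonempty (f := fun x : α × ℕ ↦ f x.1) (J := V.toEnumFinset)
    (by simpa using hV)
  obtain ⟨hIV, hcard, hsum⟩ := mem_zeroSumSubsets.1 hI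
  exact ⟨I.val.map Prod.fst, (Multiset.map_fst_le_of_subset_toEnumFinset hIV).trans hVS,
    by simpa using hcard, by simpa [Multiset.map_map] using hsum⟩

theorem exists_blocks_sum_map_eq_zero (f : α → Fin 2 → ZMod p) (n : ℕ) {S : Multiset α}
    (h : n * p + 3 * p ≤ Multiset.card S + 3) :
    ∃ (𝓑 : Multiset (Multiset α)) (U : Multiset α), S = 𝓑.sum + U ∧ Multiset.card 𝓑 = n ∧
      ∀ B ∈ 𝓑, Multiset.card B = p ∧ (B.map f).sum = 0 := by
  induction n generalizing S with
  | zero => exact ⟨0, S, by simp⟩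
  | succ n ih =>
    rw [add_mul, one_mul] at h
    obtain ⟨T, hTS, hT⟩ := exists_le_card_eq_sum_map_eq_zero f (S := S) (by omega)
    obtain ⟨S', rfl⟩ := Multiset.le_iff_exists_add.1 hTS
    rw [Multiset.card_add, hT.1] at h
    obtain ⟨𝓑, U, rfl, hcard, h𝓑⟩ := ih (S := S') (by omega)
    exact ⟨T ::ₘ 𝓑, U, by rw [Multiset.sum_cons, add_assoc], by simp [hcard],
      Multiset.forall_mem_cons.2 ⟨hT, h𝓑⟩⟩

end Multiset

/-! ### Bundling terms into blocks -/

section Bundling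

variable {G : Type*}

theorem NearlyUnitWeight.mono {k : ℕ} {S T : Multiset (ℕ × G)} (hS : NearlyUnitWeight k S)
    (hTS : T ≤ S) : NearlyUnitWeight k T := by
  obtain ⟨U, rfl⟩ := Multiset.le_iff_exists_add.1 hTS
  obtain ⟨hpos, hle, hlt⟩ := hS
  have hU := card_le_weight_of_one_le fun x hx ↦ hpos x (Multiset.mem_add.2 (.inr hx))
  rw [weight_add, Multiset.card_add] at hle hlt
  exact ⟨fun x hx ↦ hpos x (Multiset.mem_of_le hTS hx), by omega, by omega⟩

theorem NearlyUnitWeight.exists_eq_cons {k : ℕ} {S : Multiset (ℕ × G)} (hS : NearlyUnitWeight k S)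
    (hne : S ≠ 0) : ∃ j U, S = j ::ₘ U ∧ ∀ x ∈ U, x.1 = 1 := by
  by_cases h1 : ∀ x ∈ S, x.1 = 1
  · obtain ⟨j, hj⟩ := Multiset.exists_mem_of_ne_zero hne
    obtain ⟨U, rfl⟩ := Multiset.exists_cons_of_mem hj
    exact ⟨j, U, rfl, fun x hx ↦ h1 x (Multiset.mem_cons_of_mem hx)⟩
  · push Not at h1
    obtain ⟨j, hj, hj1⟩ := h1
    obtain ⟨U, rfl⟩ := Multiset.exists_cons_of_mem hj
    exact ⟨j, U, rfl, (hS.fst_eq_two_of_ne_one hj1).2.2⟩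

theorem weight_sum (𝓒 : Multiset (Multiset (ℕ × G))) : weight 𝓒.sum = (𝓒.map weight).sum :=
  map_multiset_sum (⟨⟨weight, weight_zero⟩, weight_add⟩ : Multiset (ℕ × G) →+ ℕ) 𝓒

variable {p : ℕ}

/-- The product of the terms of a block, in an arbitrary order, as a single term whose weight is
counted in units of `p`. -/
noncomputable def bundle [Monoid G] (p : ℕ) (B : Multiset (ℕ × G)) : ℕ × G :=
  (weight B / p, (B.toList.map Prod.snd).prod)

theorem prod_map_bundle [Monoid G] (p : ℕ) (L : List (Multiset (ℕ × G))) :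
    (L.map fun B ↦ (bundle p B).2).prod = ((L.flatMap Multiset.toList).map Prod.snd).prod := by
  induction L with
  | nil => rfl
  | cons B L ih =>
    rw [List.map_cons, List.prod_cons, ih, List.flatMap_cons, List.map_append, List.prod_append,
      bundle]

theorem exists_coe_le_map_eq {α β : Type*} {f : α → β} {S : Multiset α} {l : List β}
    (h : (l : Multiset β) ≤ S.map f) : ∃ L : List α, (L : Multiset α) ≤ S ∧ L.map f = l := by
  induction l generalizing S with
  | nil => exact ⟨[], Multiset.zero_le S, rfl⟩
  | cons b l ih =>
    obtain ⟨a, ha, rfl⟩ := Multiset.mem_map.1 (Multiset.mem_of_le h List.mem_cons_self)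
    obtain ⟨S, rfl⟩ := Multiset.exists_cons_of_mem ha
    rw [← Multiset.cons_coe, Multiset.map_cons, Multiset.cons_le_cons_iff] at h
    obtain ⟨L, hL, rfl⟩ := ih h
    exact ⟨a :: L, Multiset.cons_le_cons a hL, rfl⟩

theorem coe_flatMap_toList {α : Type*} (L : List (Multiset α)) :
    ((L.flatMap Multiset.toList : List α) : Multiset α) = (L : Multiset (Multiset α)).sum := by
  induction L with
  | nil => rfl
  | cons B L ih =>
    rw [List.flatMap_cons, ← Multiset.coe_add, Multiset.coe_toList, ih, ← Multiset.cons_coe,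
      Multiset.sum_cons]

theorem HasProductOneOfWeight.of_map_bundle [Monoid G] {𝓒 : Multiset (Multiset (ℕ × G))} {t : ℕ}
    (h𝓒 : ∀ B ∈ 𝓒, p ∣ weight B) (h : HasProductOneOfWeight (𝓒.map (bundle p)) t) :
    HasProductOneOfWeight 𝓒.sum (t * p) := by
  obtain ⟨l, hl, rfl, hprod⟩ := h
  obtain ⟨L, hL, rfl⟩ := exists_coe_le_map_eq hl
  refine ⟨L.flatMap Multiset.toList, ?_, ?_, ?_⟩
  · obtain ⟨U, rfl⟩ := Multiset.le_iff_exists_add.1 hL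
    rw [coe_flatMap_toList, Multiset.sum_add]
    exact Multiset.le_add_right _ _
  · rw [coe_flatMap_toList, weight_sum, weight, ← Multiset.map_coe, Multiset.map_map,
      ← Multiset.sum_map_mul_right]
    refine congrArg _ (Multiset.map_congr rfl fun B hB ↦ ?_)
    exact (Nat.div_mul_cancel (h𝓒 B (Multiset.mem_of_le hL hB))).symm
  · rw [← prod_map_bundle p, ← hprod, List.map_map, Function.comp_def]

theorem nearlyUnitWeight_map_bundle [Monoid G] {k n : ℕ} {𝓒 : Multiset (Multiset (ℕ × G))}
    (hp : 0 < p) (hk : 2 ≤ k) (hcard : Multiset.card 𝓒 = n + 1)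
    (hweight : weight 𝓒.sum ≤ (n + 2) * p)
    (hpos : ∀ B ∈ 𝓒, 1 ≤ weight B) (hdvd : ∀ B ∈ 𝓒, p ∣ weight B) :
    NearlyUnitWeight k (𝓒.map (bundle p)) := by
  have hle : weight (𝓒.map (bundle p)) ≤ n + 2 := by
    refine le_of_mul_le_mul_right ?_ hp
    rw [weight, Multiset.map_map, ← Multiset.sum_map_mul_right]
    refine hweight.trans' (weight_sum 𝓒 ▸ (congrArg _ (Multiset.map_congr rfl fun B hB ↦ ?_)).le)
    exact Nat.div_mul_cancel (hdvd B hB)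
  refine ⟨?_, by rw [Multiset.card_map]; omega, by rw [Multiset.card_map]; omega⟩
  rintro _ hx
  obtain ⟨B, hB, rfl⟩ := Multiset.mem_map.1 hx
  exact Nat.div_pos (Nat.le_of_dvd (hpos B hB) (hdvd B hB)) hp

variable [Fact p.Prime]

/-- The constraint on the weight is the first of three linear conditions modulo `p`, so that the
Davenport constant of `C_p ^ 3` applies. -/
theorem NearlyUnitWeight.exists_le_weight_sum_eq_zero {k : ℕ} {S : Multiset (ℕ × G)}
    (hS : NearlyUnitWeight k S) (f : G → Fin 2 → ZMod p) (h : 3 * p ≤ Multiset.card S + 2) :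
    ∃ T ≤ S, T ≠ 0 ∧ weight T ≤ 2 * p ∧ p ∣ weight T ∧ (T.map (f ∘ Prod.snd)).sum = 0 := by
  have hp := (Fact.out : p.Prime).two_le
  obtain ⟨V, hVS, hV⟩ := exists_le_card_eq (S := S) (m := 3 * p - 2) (by omega)
  obtain ⟨T, hTV, hT0, hT⟩ := exists_le_sum_map_eq_zero (S := V)
    (fun x : ℕ × G ↦ (Fin.cons (x.1 : ZMod p) (f x.2) : Fin 3 → ZMod p)) (by simp; omega)
  have hTcard := Multiset.card_le_card hTV
  have hTweight := (hS.mono (hTV.trans hVS)).2.1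
  have hcoord : ∀ i, (T.map fun x ↦ (Fin.cons (x.1 : ZMod p) (f x.2) : Fin 3 → ZMod p) i).sum = 0 :=
    fun i ↦ by
      simpa only [Pi.multiset_sum_apply, Multiset.map_map, Function.comp_def, Pi.zero_apply]
        using congrFun hT i
  have hdvd : p ∣ weight T := (ZMod.natCast_eq_zero_iff _ _).1 <| by
    simpa [weight, Nat.cast_multiset_sum, Multiset.map_map] using hcoord 0
  refine ⟨T, hTV.trans hVS, hT0, ?_, hdvd, funext fun i ↦ ?_⟩
  · obtain ⟨c, hc⟩ := hdvd
    have hc3 : c < 3 := lt_of_mul_lt_mul_left' (a := p) (by omega)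
    exact hc ▸ (Nat.mul_le_mul_left p (Nat.le_of_lt_succ hc3)).trans_eq (mul_comm p 2)
  · simpa [Pi.multiset_sum_apply, Multiset.map_map] using hcoord i.succ

theorem NearlyUnitWeight.exists_blocks {k n : ℕ} {S : Multiset (ℕ × G)} (hS : NearlyUnitWeight k S)
    (f : G → Fin 2 → ZMod p) (h : n * p + 3 * p ≤ Multiset.card S + 2) :
    ∃ 𝓒 : Multiset (Multiset (ℕ × G)), 𝓒.sum ≤ S ∧ Multiset.card 𝓒 = n + 1 ∧
      weight 𝓒.sum ≤ (n + 2) * p ∧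
      ∀ B ∈ 𝓒, B ≠ 0 ∧ p ∣ weight B ∧ (B.map (f ∘ Prod.snd)).sum = 0 := by
  have hp := (Fact.out : p.Prime).two_le
  have hne : S ≠ 0 := by
    rintro rfl
    rw [Multiset.card_zero] at h
    omega
  obtain ⟨j, U, rfl, hU⟩ := hS.exists_eq_cons hne
  rw [Multiset.card_cons] at h
  obtain ⟨𝓑, U', rfl, hcard, h𝓑⟩ := exists_blocks_sum_map_eq_zero (f ∘ Prod.snd) n
    (S := U) (by omega)
  have hB1 : ∀ B ∈ 𝓑, weight B = p := fun B hB ↦ by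
    rw [weight_eq_card, (h𝓑 B hB).1]
    exact fun x hx ↦ hU x (Multiset.mem_of_le
      ((Multiset.le_sum_of_mem hB).trans (Multiset.le_add_right _ _)) hx)
  have h𝓑weight : weight 𝓑.sum = n * p := by
    rw [weight_sum, Multiset.map_congr rfl hB1, Multiset.map_const', Multiset.sum_replicate, hcard,
      smul_eq_mul]
  have h𝓑card : Multiset.card 𝓑.sum = n * p := by
    rw [← h𝓑weight, weight_eq_card fun x hx ↦ hU x (Multiset.mem_add.2 (.inl hx))]
  rw [Multiset.card_add] at h
  obtain ⟨T, hT, hT0, hTw, hTp, hTf⟩ := (hS.mono (T := j ::ₘ U')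
    (Multiset.cons_le_cons j (Multiset.le_add_left _ _))).exists_le_weight_sum_eq_zero f
    (by rw [Multiset.card_cons]; omega)
  refine ⟨T ::ₘ 𝓑, ?_, by rw [Multiset.card_cons, hcard], ?_,
    Multiset.forall_mem_cons.2 ⟨⟨hT0, hTp, hTf⟩, fun B hB ↦ ⟨?_, (hB1 B hB).symm.dvd, (h𝓑 B hB).2⟩⟩⟩
  · rw [Multiset.sum_cons, ← Multiset.add_cons, add_comm]
    exact add_le_add_right hT _
  · rw [Multiset.sum_cons, weight_add, h𝓑weight]
    linarith
  · rw [← Multiset.card_pos, (h𝓑 B hB).1]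
    omega

theorem ForcesProductOne.of_sum_map_eq_zero [Monoid G] {K K' : Set G} {M A : ℕ}
    {f : G → Fin 2 → ZMod p}
    (hf : ∀ l : List G, (∀ x ∈ l, x ∈ K) → (l.map f).sum = 0 → l.prod ∈ K')
    (h : ForcesProductOne K' M A) (hM : 1 ≤ M) :
    ForcesProductOne K (p * (p * M)) (p * (A + 2) - 2) := by
  intro k S hSK hS hcard
  have hp := (Fact.out : p.Prime).two_le
  have hk : 1 ≤ k := by
    have := hS.card_le_weight
    have := hS.2.2
    omega
  have hkp : 2 ≤ k * p := hp.trans (Nat.le_mul_of_pos_left p hk)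
  obtain ⟨n, hn⟩ := Nat.exists_eq_add_of_le' (show 1 ≤ k * p * M + A from
    (one_le_mul (by omega) hM).trans (Nat.le_add_right _ _))
  obtain ⟨𝓒, h𝓒S, h𝓒card, h𝓒weight, h𝓒⟩ := hS.exists_blocks f (n := n) (p := p) <| by
    have : k * (p * (p * M)) + p * (A + 2) = n * p + 3 * p := by linear_combination p * hn
    omega
  have hmem : ∀ B ∈ 𝓒, B ≤ S := fun B hB ↦ (Multiset.le_sum_of_mem hB).trans h𝓒S
  have hunit : NearlyUnitWeight (k * p) (𝓒.map (bundle p)) :=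
    nearlyUnitWeight_map_bundle (by omega) hkp h𝓒card h𝓒weight
      (fun B hB ↦ (Multiset.card_pos.2 (h𝓒 B hB).1).trans_le (hS.mono (hmem B hB)).card_le_weight)
      fun B hB ↦ (h𝓒 B hB).2.1
  have hbundle : ∀ x ∈ 𝓒.map (bundle p), x.2 ∈ K' := by
    intro x hx
    obtain ⟨B, hB, rfl⟩ := Multiset.mem_map.1 hx
    refine hf _ ?_ ?_
    · simp only [List.mem_map, Multiset.mem_toList]
      rintro _ ⟨y, hy, rfl⟩
      exact hSK y (Multiset.mem_of_le (hmem B hB) hy)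
    · rw [List.map_map, ← Multiset.sum_coe, ← Multiset.map_coe, Multiset.coe_toList]
      exact (h𝓒 B hB).2.2
  have hone := h (k * p) _ hbundle hunit (by rw [Multiset.card_map, h𝓒card]; omega)
  have := (hone.of_map_bundle fun B hB ↦ (h𝓒 B hB).2.1).mono h𝓒S
  rwa [show k * (p * (p * M)) = k * p * M * p by ring]

end Bundling

/-! ### Descent along `C_m ⋊ C_m` -/

section Descent

variable {m : ℕ} {φ : Multiplicative (ZMod m) →* MulAut (Multiplicative (ZMod m))}

theorem toAdd_map_eq_mul [NeZero m] (ψ : Multiplicative (ZMod m) →* Multiplicative (ZMod m))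
    (z : Multiplicative (ZMod m)) : (ψ z).toAdd = (ψ (.ofAdd 1)).toAdd * z.toAdd := by
  have hz : z = .ofAdd (1 : ZMod m) ^ z.toAdd.val := by
    rw [← ofAdd_nsmul, nsmul_one, ZMod.natCast_zmod_val, ofAdd_toAdd]
  conv_lhs => rw [hz, map_pow, toAdd_pow, nsmul_eq_mul, ZMod.natCast_zmod_val, mul_comm]

/-- The multiplication of `ZMod m` by which an element of the acting cyclic group acts. -/
def actionMultiplier [NeZero m] (φ : Multiplicative (ZMod m) →* MulAut (Multiplicative (ZMod m))) :
    Multiplicative (ZMod m) →* ZMod m where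
  toFun a := (φ a (.ofAdd 1)).toAdd
  map_one' := by simp
  map_mul' a b := by
    rw [map_mul, MulAut.mul_apply]
    exact toAdd_map_eq_mul (φ a).toMonoidHom _

/-- The residue of `z / d` modulo `p`, for a multiple `z` of `d`, when `d * p ∣ m`. -/
def quotientResidue (p d : ℕ) (z : ZMod m) : ZMod p := (z.val / d : ℕ)

variable [NeZero m] {p d q : ℕ}

theorem toAdd_left_mul (g h : Multiplicative (ZMod m) ⋊[φ] Multiplicative (ZMod m)) :
    (g * h).left.toAdd = g.left.toAdd + actionMultiplier φ g.right * h.left.toAdd := by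
  rw [SemidirectProduct.mul_left, toAdd_mul]
  exact congrArg _ (toAdd_map_eq_mul (φ g.right).toMonoidHom _)

/-- The elements of `C_m ⋊[φ] C_m` both of whose coordinates are multiples of `d`. -/
def multiples (φ : Multiplicative (ZMod m) →* MulAut (Multiplicative (ZMod m))) (d : ℕ) :
    Submonoid (Multiplicative (ZMod m) ⋊[φ] Multiplicative (ZMod m)) where
  carrier := {g | (d : ZMod m) ∣ g.left.toAdd ∧ (d : ZMod m) ∣ g.right.toAdd}
  one_mem' := ⟨dvd_zero _, dvd_zero _⟩
  mul_mem' {g h} hg hh := ⟨toAdd_left_mul g h ▸ hg.1.add (hh.1.mul_left _), hg.2.add hh.2⟩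

theorem mem_multiples {g : Multiplicative (ZMod m) ⋊[φ] Multiplicative (ZMod m)} :
    g ∈ multiples φ d ↔ (d : ZMod m) ∣ g.left.toAdd ∧ (d : ZMod m) ∣ g.right.toAdd :=
  Iff.rfl

theorem quotientResidue_mul (hdq : d * q = m) (hpq : p ∣ q) (b : ZMod m) :
    quotientResidue p d ((d : ZMod m) * b) =
      ZMod.castHom (hpq.trans (Dvd.intro_left d hdq)) (ZMod p) b := by
  have hd : 0 < d := Nat.pos_of_ne_zero fun hd ↦ NeZero.ne m (by simp [← hdq, hd])
  have hval : ((d : ZMod m) * b).val / d = b.val % q := by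
    rw [← ZMod.natCast_zmod_val b, ← Nat.cast_mul, ZMod.val_natCast, ZMod.natCast_zmod_val]
    nth_rw 2 [← hdq]
    rw [Nat.mul_mod_mul_left, Nat.mul_div_cancel_left _ hd]
  rw [quotientResidue, hval, ZMod.castHom_apply, ZMod.cast_eq_val,
    ← ZMod.natCast_mod, Nat.mod_mod_of_dvd _ hpq, ZMod.natCast_mod]

theorem mul_dvd_of_quotientResidue_eq_zero (hdq : d * q = m) (hpq : p ∣ q) {z : ZMod m}
    (hz : (d : ZMod m) ∣ z) (h : quotientResidue p d z = 0) : ((d * p : ℕ) : ZMod m) ∣ z := by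
  obtain ⟨b, rfl⟩ := hz
  rw [quotientResidue_mul hdq hpq, ZMod.castHom_apply, ZMod.cast_eq_val,
    ZMod.natCast_eq_zero_iff] at h
  rw [Nat.cast_mul, ← ZMod.natCast_zmod_val b]
  exact mul_dvd_mul_left _ (Nat.cast_dvd_cast h)

/-- The image in `ZMod p` of the multiplier is a root of unity of order dividing both `q` and
`p - 1`, where `p` is the smallest prime factor of `q`. -/
theorem castHom_actionMultiplier_eq_one (hdq : d * q = m) (hp : q.minFac.Prime)
    (hpm : q.minFac ∣ m) {a : Multiplicative (ZMod m)} (ha : (d : ZMod m) ∣ a.toAdd) :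
    ZMod.castHom hpm (ZMod q.minFac) (actionMultiplier φ a) = 1 := by
  have : Fact q.minFac.Prime := ⟨hp⟩
  let u := (ZMod.castHom hpm (ZMod q.minFac)).toMonoidHom.comp (actionMultiplier φ)
  have hq : u a ^ q = 1 := by
    have haq : a ^ q = 1 := by
      obtain ⟨b, hb⟩ := ha
      refine Multiplicative.toAdd.injective ?_
      rw [toAdd_pow, hb, nsmul_eq_mul, ← mul_assoc, ← Nat.cast_mul, mul_comm q, hdq,
        ZMod.natCast_self, zero_mul, toAdd_one]
    rw [← map_pow, haq, map_one]
  have hu : u a ≠ 0 := ((Group.isUnit a).map u).ne_zero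
  have hcoprime : q.Coprime (q.minFac - 1) :=
    Nat.coprime_of_lt_minFac (Nat.sub_ne_zero_of_lt hp.one_lt) (Nat.sub_lt hp.pos one_pos)
  change u a = 1
  simpa only [hcoprime.gcd_eq_one, pow_one] using
    pow_gcd_eq_one.2 ⟨hq, ZMod.pow_card_sub_one_eq_one hu⟩

theorem quotientResidue_add (hdq : d * q = m) (hpq : p ∣ q) {z w : ZMod m} (hz : (d : ZMod m) ∣ z)
    (hw : (d : ZMod m) ∣ w) :
    quotientResidue p d (z + w) = quotientResidue p d z + quotientResidue p d w := by
  obtain ⟨a, rfl⟩ := hz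
  obtain ⟨b, rfl⟩ := hw
  rw [← mul_add, quotientResidue_mul hdq hpq, quotientResidue_mul hdq hpq,
    quotientResidue_mul hdq hpq, map_add]

theorem quotientResidue_actionMultiplier_mul (hdq : d * q = m) (hp : q.minFac.Prime)
    {a : Multiplicative (ZMod m)} (ha : (d : ZMod m) ∣ a.toAdd) {z : ZMod m}
    (hz : (d : ZMod m) ∣ z) :
    quotientResidue q.minFac d (actionMultiplier φ a * z) = quotientResidue q.minFac d z := by
  obtain ⟨b, rfl⟩ := hz
  rw [mul_left_comm, quotientResidue_mul hdq q.minFac_dvd, quotientResidue_mul hdq q.minFac_dvd,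
    map_mul, castHom_actionMultiplier_eq_one hdq hp _ ha, one_mul]

/-- Dividing both coordinates by `d` and reducing modulo `p`: when `d * q = m` and `p` is the
smallest prime factor of `q`, this maps `multiples φ d` onto `C_p ^ 2` with kernel
`multiples φ (d * p)`. -/
def residuePair (p d : ℕ) (g : Multiplicative (ZMod m) ⋊[φ] Multiplicative (ZMod m)) :
    Fin 2 → ZMod p :=
  ![quotientResidue p d g.left.toAdd, quotientResidue p d g.right.toAdd]

theorem residuePair_mul (hdq : d * q = m) (hp : q.minFac.Prime)
    {g h : Multiplicative (ZMod m) ⋊[φ] Multiplicative (ZMod m)} (hg : g ∈ multiples φ d)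
    (hh : h ∈ multiples φ d) :
    residuePair q.minFac d (g * h) = residuePair q.minFac d g + residuePair q.minFac d h := by
  have hleft : quotientResidue q.minFac d (g * h).left.toAdd =
      quotientResidue q.minFac d g.left.toAdd + quotientResidue q.minFac d h.left.toAdd := by
    rw [toAdd_left_mul, quotientResidue_add hdq q.minFac_dvd hg.1 (hh.1.mul_left _),
      quotientResidue_actionMultiplier_mul hdq hp hg.2 hh.1]
  have hright : quotientResidue q.minFac d (g * h).right.toAdd =
      quotientResidue q.minFac d g.right.toAdd + quotientResidue q.minFac d h.right.toAdd :=
    quotientResidue_add hdq q.minFac_dvd hg.2 hh.2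
  rw [residuePair, hleft, hright]
  simp [residuePair]

theorem residuePair_list_prod (hdq : d * q = m) (hp : q.minFac.Prime)
    {l : List (Multiplicative (ZMod m) ⋊[φ] Multiplicative (ZMod m))}
    (hl : ∀ g ∈ l, g ∈ multiples φ d) :
    residuePair q.minFac d l.prod = (l.map (residuePair q.minFac d)).sum := by
  induction l with
  | nil => simp [residuePair, quotientResidue]
  | cons g l ih =>
    rw [List.forall_mem_cons] at hl
    rw [List.prod_cons, residuePair_mul hdq hp hl.1 (Submonoid.list_prod_mem _ hl.2), ih hl.2,
      List.map_cons, List.sum_cons]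

theorem mem_multiples_mul_of_residuePair_eq_zero (hdq : d * q = m) (hpq : p ∣ q)
    {g : Multiplicative (ZMod m) ⋊[φ] Multiplicative (ZMod m)} (hg : g ∈ multiples φ d)
    (h : residuePair p d g = 0) : g ∈ multiples φ (d * p) :=
  ⟨mul_dvd_of_quotientResidue_eq_zero hdq hpq hg.1 (congrFun h 0),
    mul_dvd_of_quotientResidue_eq_zero hdq hpq hg.2 (congrFun h 1)⟩

variable {G : Type*} [Group G] (π : G →* Multiplicative (ZMod m) ⋊[φ] Multiplicative (ZMod m))

theorem comap_multiples_self : ((multiples φ m).comap π : Set G) = π.ker := by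
  ext g
  simp [mem_multiples, MonoidHom.mem_ker, SemidirectProduct.ext_iff]

theorem list_prod_mem_comap_multiples_mul (hdq : d * q = m) (hp : q.minFac.Prime) {l : List G}
    (hl : ∀ g ∈ l, g ∈ (multiples φ d).comap π)
    (hsum : (l.map (residuePair q.minFac d ∘ π)).sum = 0) :
    l.prod ∈ (multiples φ (d * q.minFac)).comap π := by
  have hl' : ∀ h ∈ l.map π, h ∈ multiples φ d := by simpa using hl
  rw [Submonoid.mem_comap, map_list_prod]
  refine mem_multiples_mul_of_residuePair_eq_zero hdq q.minFac_dvd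
    (Submonoid.list_prod_mem _ hl') ?_
  rw [residuePair_list_prod hdq hp hl', List.map_map, hsum]

theorem forcesProductOne_comap_multiples [Finite π.ker] (q : ℕ) (hdq : d * q = m) :
    ForcesProductOne ((multiples φ d).comap π : Set G) (Nat.card π.ker * q ^ 2)
      (Nat.card π.ker * q + q - 2) := by
  induction q using Nat.strong_induction_on generalizing d with
  | h q ih =>
  obtain rfl | hq1 := eq_or_ne q 1
  · obtain rfl : d = m := by simpa using hdq
    rw [comap_multiples_self]
    simpa using forcesProductOne_subgroup π.ker
  have hp := Nat.minFac_prime hq1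
  have : Fact q.minFac.Prime := ⟨hp⟩
  obtain ⟨q', hq'⟩ := q.minFac_dvd
  have hq'pos : 0 < q' := Nat.pos_of_ne_zero fun h ↦ NeZero.ne m (by rw [← hdq, hq', h]; simp)
  have hker : 0 < Nat.card π.ker := Nat.card_pos
  have hlt : q' < q := by
    rw [hq']
    exact lt_mul_of_one_lt_left hq'pos hp.one_lt
  have hstep := (ih q' hlt (d := d * q.minFac) (by rw [mul_assoc, ← hq', hdq])).of_sum_map_eq_zero
    (p := q.minFac) (K := (multiples φ d).comap π) (f := residuePair q.minFac d ∘ π)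
    (fun l hl hsum ↦ list_prod_mem_comap_multiples_mul π hdq hp hl hsum)
    (Nat.mul_pos hker (pow_pos hq'pos 2))
  have hM : q.minFac * (q.minFac * (Nat.card π.ker * q' ^ 2)) = Nat.card π.ker * q ^ 2 := by
    conv_rhs => rw [hq']
    ring
  have hA : q.minFac * (Nat.card π.ker * q' + q' - 2 + 2) = Nat.card π.ker * q + q := by
    have : 0 < Nat.card π.ker * q' := Nat.mul_pos hker hq'pos
    rw [Nat.sub_add_cancel (by lia)]
    conv_rhs => rw [hq']
    ring
  rwa [hM, hA] at hstep

theorem comap_multiples_one : ((multiples φ 1).comap π : Set G) = Set.univ := by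
  ext g
  simp [mem_multiples]

end Descent

section Bounds

variable {G : Type*} [Group G]

theorem IsProductOne.of_cons_one {T : Multiset G} (h : IsProductOne (1 ::ₘ T)) :
    IsProductOne T := by
  obtain ⟨l, hl, hprod⟩ := h
  obtain ⟨a, b, rfl⟩ := List.append_of_mem (show (1 : G) ∈ l by
    rw [← Multiset.mem_coe, hl]; exact Multiset.mem_cons_self 1 T)
  refine ⟨a ++ b, (Multiset.cons_inj_right 1).1 ?_, by simpa using hprod⟩
  rw [← hl, Multiset.cons_coe]
  exact Multiset.coe_eq_coe.2 List.perm_middle.symm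

theorem IsProductOne.of_add_replicate_one {T : Multiset G} {n : ℕ}
    (h : IsProductOne (T + Multiset.replicate n 1)) : IsProductOne T := by
  induction n with
  | zero => simpa using h
  | succ n ih =>
    rw [Multiset.replicate_succ, Multiset.add_cons] at h
    exact ih h.of_cons_one

theorem ProductOneFree.add_card_le {S : Multiset G} (hS : ProductOneFree S) {n E : ℕ} (hn : 0 < n)
    (hE : ∀ S : Multiset G, E ≤ Multiset.card S →
      ∃ T ≤ S, Multiset.card T = n ∧ IsProductOne T) : n + Multiset.card S ≤ E := by
  classical
  by_contra! hlt
  obtain ⟨T, hT, hcard, hone⟩ := hE (S + Multiset.replicate (n - 1) 1) (by simp; omega)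
  obtain ⟨k, hk, hinter⟩ := Multiset.le_replicate_iff.1
    (Multiset.inter_le_right (s := T) (t := Multiset.replicate (n - 1) 1))
  have hsplit := Multiset.sub_add_inter T (Multiset.replicate (n - 1) 1)
  rw [hinter] at hsplit
  refine hS _ (tsub_le_iff_right.2 hT) (fun h0 ↦ ?_) (hsplit.symm ▸ hone).of_add_replicate_one
  rw [h0, zero_add] at hsplit
  rw [← hsplit, Multiset.card_replicate] at hcard
  omega

theorem exists_isProductOne_of_forcesProductOne {M A : ℕ}
    (h : ForcesProductOne (Set.univ : Set G) M A) {S : Multiset G} (hS : M + A ≤ Multiset.card S) :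
    ∃ T ≤ S, Multiset.card T = M ∧ IsProductOne T := by
  have hweight : weight (S.map (Prod.mk 1)) = Multiset.card S := by simp [weight]
  obtain ⟨l, hl, hM, hprod⟩ := h 1 (S.map (Prod.mk 1)) (fun _ _ ↦ Set.mem_univ _)
    ⟨by simp, by simp [hweight], by simp [hweight]⟩ (by simpa using hS)
  obtain ⟨L, hL, rfl⟩ := exists_coe_le_map_eq hl
  refine ⟨L, hL, by simpa [weight, Function.comp_def] using hM, L, rfl, by simpa using hprod⟩

theorem card_eq_card_mul_sq_of_quotient_equiv {m : ℕ}
    {φ : Multiplicative (ZMod m) →* MulAut (Multiplicative (ZMod m))} {N : Subgroup G} [N.Normal]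
    (e : G ⧸ N ≃* Multiplicative (ZMod m) ⋊[φ] Multiplicative (ZMod m)) :
    Nat.card G = Nat.card N * m ^ 2 := by
  rw [Subgroup.card_eq_card_quotient_mul_card_subgroup N, Nat.card_congr e.toEquiv,
    SemidirectProduct.card, Nat.card_congr Multiplicative.toAdd, Nat.card_zmod, ← sq, mul_comm]

theorem exists_isProductOne_of_quotient_equiv {m : ℕ} [NeZero m]
    {φ : Multiplicative (ZMod m) →* MulAut (Multiplicative (ZMod m))} {N : Subgroup G} [N.Normal]
    [Finite N] (e : G ⧸ N ≃* Multiplicative (ZMod m) ⋊[φ] Multiplicative (ZMod m))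
    {S : Multiset G}
    (hS : Nat.card N * m ^ 2 + (Nat.card N * m + m - 2) ≤ Multiset.card S) :
    ∃ T ≤ S, Multiset.card T = Nat.card N * m ^ 2 ∧ IsProductOne T := by
  obtain ⟨π, rfl⟩ : ∃ π : G →* Multiplicative (ZMod m) ⋊[φ] Multiplicative (ZMod m), π.ker = N :=
    ⟨(e : G ⧸ N →* _).comp (QuotientGroup.mk' N), by
      rw [MonoidHom.ker_mulEquiv_comp, QuotientGroup.ker_mk']⟩
  have hforces := forcesProductOne_comap_multiples π (d := 1) m (one_mul m)
  rw [comap_multiples_one] at hforces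
  exact exists_isProductOne_of_forcesProductOne hforces hS

end Bounds

/-- If a finite group `G` has a normal subgroup `N` with `G/N ≅ C_m ⋉_φ C_m`,
then `|G| + d(G) ≤ E(G) ≤ |G| + |G|/m + m − 2`. -/
theorem E_bounds_of_quotient_semidirect {G : Type*} [Group G] [Fintype G]
    (m : ℕ) (hm : 0 < m)
    (φ : Multiplicative (ZMod m) →* MulAut (Multiplicative (ZMod m)))
    (N : Subgroup G) [N.Normal]
    (e : (G ⧸ N) ≃* (Multiplicative (ZMod m) ⋊[φ] Multiplicative (ZMod m)))
    (d E : ℕ)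
    (hd : IsGreatest {k : ℕ | ∃ S : Multiset G, Multiset.card S = k ∧ ProductOneFree S} d)
    (hE : IsLeast {l : ℕ | ∀ S : Multiset G, l ≤ Multiset.card S →
      ∃ T ≤ S, Multiset.card T = Fintype.card G ∧ IsProductOne T} E) :
    Fintype.card G + d ≤ E ∧ E ≤ Fintype.card G + Fintype.card G / m + m - 2 := by
  have : NeZero m := ⟨hm.ne'⟩
  have hcard : Fintype.card G = Nat.card N * m ^ 2 := by
    rw [Fintype.card_eq_nat_card, card_eq_card_mul_sq_of_quotient_equiv e]
  have hdiv : Fintype.card G / m = Nat.card N * m := by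
    rw [hcard, sq, ← mul_assoc, Nat.mul_div_cancel _ hm]
  refine ⟨?_, hE.2 fun S hS ↦ ?_⟩
  · obtain ⟨S, rfl, hS⟩ := hd.1
    exact hS.add_card_le Fintype.card_pos hE.1
  · rw [hdiv] at hS
    rw [hcard] at hS ⊢
    have hNm : 0 < Nat.card N * m := Nat.mul_pos Nat.card_pos hm
    exact exists_isProductOne_of_quotient_equiv e (by lia)
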